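/- arXiv:1109.1200 — 2 statements merged into one kernel-verified Lean document; each statement's English description precedes it below -/
import Mathlib

section
/- Let H be an infinite-dimensional separable complex Hilbert space. Every action of the unitary group U(H) (as an abstract group) by isometries on a separable metric space X is automatically continuous as a map U(H) × X → X, where U(H) carries the strong operator topology. -/
/-- The strong operator topology on the group of invertible linear isometries of `H`:
the topology of pointwise convergence on `H`. -/
noncomputable def strongOperatorTopology (𝕜 H : Type*) [RCLike 𝕜] [NormedAddCommGroup H]
    [InnerProductSpace 𝕜 H] : TopologicalSpace (H ≃ₗᵢ[𝕜] H) :=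
  TopologicalSpace.induced (fun u => (u : H → H)) Pi.topologicalSpace

/-! The displacement `ℓ g = dist (a g x) x` of a point is a group seminorm on `U(H)` whose
left-invariant pseudometric is separable, and it suffices to show that such an `ℓ` is small near `1`
in the strong operator topology (Tsankov).

By a diagonal argument and a commutator trick, `ℓ` is small on the full unitary group of some
infinite-dimensional coordinate subspace. Among uncountably many shifts two are `ℓ`-close, and the
resulting small shift moves that subspace so that it and its translate generate the fixator of a
finite set of vectors; hence `ℓ` is small on the fixator of a finite-dimensional subspace `F`.
Finally, an `ℓ`-small unitary `w` rotates `F` by a nonzero angle `θ`. A product of two elements of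
the double coset of `w` by the fixator can have any compression to `F` that is close to `cos² θ`,
and these products fill a neighbourhood of `1` up to translation. -/

open Filter Module Set TopologicalSpace
open scoped InnerProductSpace

/-! ### Separable group seminorms -/

/-- A seminorm `ℓ` on a group is separable if the left-invariant pseudometric
`(g, h) ↦ ℓ (g⁻¹ * h)` is separable. -/
def IsSeparableGroupSeminorm {G : Type*} [Group G] (ℓ : GroupSeminorm G) : Prop :=
  ∀ δ > 0, ∃ s : ℕ → G, ∀ g, ∃ n, ℓ ((s n)⁻¹ * g) < δ

section GroupSeminorm

variable {G : Type*} [Group G] {ℓ : GroupSeminorm G}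

open scoped commutatorElement in
theorem groupSeminorm_commutatorElement_le (ℓ : GroupSeminorm G) (g h : G) :
    ℓ ⁅g, h⁆ ≤ 2 * ℓ g + 2 * ℓ h :=
  calc ℓ (g * h * g⁻¹ * h⁻¹) ≤ ℓ g + ℓ h + ℓ g⁻¹ + ℓ h⁻¹ := by
        grw [map_mul_le_add, map_mul_le_add, map_mul_le_add]
    _ = 2 * ℓ g + 2 * ℓ h := by rw [map_inv_eq_map, map_inv_eq_map]; ring

theorem groupSeminorm_conj_le (ℓ : GroupSeminorm G) (g h : G) :
    ℓ (g * h * g⁻¹) ≤ ℓ h + 2 * ℓ g :=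
  calc ℓ (g * h * g⁻¹) ≤ ℓ g + ℓ h + ℓ g⁻¹ := by grw [map_mul_le_add, map_mul_le_add]
    _ = ℓ h + 2 * ℓ g := by rw [map_inv_eq_map]; ring

theorem IsSeparableGroupSeminorm.exists_ne_inv_mul_lt (hℓ : IsSeparableGroupSeminorm ℓ)
    {ι : Type*} [Uncountable ι] (u : ι → G) {δ : ℝ} (hδ : 0 < δ) :
    ∃ i j, i ≠ j ∧ ℓ ((u i)⁻¹ * u j) < δ := by
  obtain ⟨s, hs⟩ := hℓ (δ / 2) (half_pos hδ)
  choose f hf using fun i => hs (u i)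
  obtain ⟨i, j, hij, hne⟩ :=
    Function.not_injective_iff.1 fun h : f.Injective => not_countable (α := ι) h.countable
  refine ⟨i, j, hne, ?_⟩
  calc ℓ ((u i)⁻¹ * u j) = ℓ (((s (f i))⁻¹ * u i)⁻¹ * ((s (f j))⁻¹ * u j)) := by
        rw [hij]; group
    _ ≤ ℓ ((s (f i))⁻¹ * u i) + ℓ ((s (f j))⁻¹ * u j) := by
        grw [map_mul_le_add, map_inv_eq_map]
    _ < δ := by linarith [hf i, hf j]

theorem eventually_floor_nat_mul_ne {x y : ℝ} (h : x ≠ y) :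
    ∀ᶠ n : ℕ in atTop, ⌊n * x⌋ ≠ ⌊n * y⌋ := by
  obtain ⟨N, hN⟩ := exists_nat_ge (1 / |x - y|)
  filter_upwards [eventually_ge_atTop N] with n hn heq
  have hlt : n * |x - y| < 1 := by
    simpa only [← mul_sub, abs_mul, Nat.abs_cast] using Int.abs_sub_lt_one_of_floor_eq_floor heq
  have hpos : 0 < |x - y| := abs_pos.2 (sub_ne_zero.2 h)
  have hle : 1 / |x - y| ≤ n := hN.trans (Nat.cast_le.2 hn)
  exact hlt.not_ge ((div_le_iff₀ hpos).1 hle)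

/-- The sequences `n ↦ ⌊n * x⌋`, `x : ℝ`, are uncountably many and eventually pairwise distinct. -/
theorem IsSeparableGroupSeminorm.exists_eventually_ne_zero_lt (hℓ : IsSeparableGroupSeminorm ℓ)
    (φ : Multiplicative (ℕ → ℤ) →* G) {δ : ℝ} (hδ : 0 < δ) :
    ∃ d : ℕ → ℤ, (∀ᶠ n in atTop, d n ≠ 0) ∧ ℓ (φ (.ofAdd d)) < δ := by
  obtain ⟨x, y, hxy, hlt⟩ :=
    hℓ.exists_ne_inv_mul_lt (fun x : ℝ => φ (.ofAdd fun n => ⌊n * x⌋)) hδ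
  rw [← map_inv, ← map_mul] at hlt
  refine ⟨fun n => -⌊n * x⌋ + ⌊n * y⌋, ?_, hlt⟩
  filter_upwards [eventually_floor_nat_mul_ne hxy] with n hn heq
  exact hn (neg_add_eq_zero.1 heq)

end GroupSeminorm

section OrbitSeminorm

variable {G X : Type*} [Group G] [PseudoMetricSpace X]

/-- The displacement `g ↦ dist (a g x) x` of a point `x` under an isometric action `a`. -/
def displacementSeminorm (a : G →* (X ≃ᵢ X)) (x : X) : GroupSeminorm G where
  toFun g := dist (a g x) x
  map_one' := by simp
  mul_le' g h := by
    rw [map_mul, IsometryEquiv.mul_apply, add_comm, ← (a g).dist_eq (a h x)]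
    exact dist_triangle _ _ _
  inv' g := by
    rw [map_inv, ← (a g).dist_eq, IsometryEquiv.apply_inv_self, dist_comm]

theorem dist_apply_apply_eq_displacementSeminorm (a : G →* (X ≃ᵢ X)) (x : X) (g h : G) :
    dist (a g x) (a h x) = displacementSeminorm a x (g⁻¹ * h) := by
  change _ = dist (a (g⁻¹ * h) x) x
  rw [← (a g).dist_eq (a (g⁻¹ * h) x), ← IsometryEquiv.mul_apply, ← map_mul,
    mul_inv_cancel_left, dist_comm]

theorem isSeparableGroupSeminorm_displacementSeminorm [SeparableSpace X]
    (a : G →* (X ≃ᵢ X)) (x : X) : IsSeparableGroupSeminorm (displacementSeminorm a x) := by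
  intro δ hδ
  have : Nonempty (range fun g => a g x) := ⟨⟨_, 1, rfl⟩⟩
  have := UniformSpace.secondCountable_of_separable X
  choose s hs using fun n => (denseSeq (range fun g => a g x) n).2
  refine ⟨s, fun g => ?_⟩
  obtain ⟨n, hn⟩ := Metric.denseRange_iff.1
    (denseRange_denseSeq (range fun g => a g x)) ⟨a g x, g, rfl⟩ δ hδ
  have hsn : a (s n) x = _ := hs n
  refine ⟨n, ?_⟩
  rw [← dist_apply_apply_eq_displacementSeminorm, dist_comm, hsn]
  exact hn

end OrbitSeminorm

/-- `V` takes the value `u` on the forward orbit of `p` and `1` elsewhere. -/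
theorem exists_apply_eq_mulSingle_mul {I U : Type*} [DecidableEq I] [Monoid U] (τ : Equiv.Perm I)
    {p : I} (hp : ∀ r : ℕ, (τ ^ (r + 1)) p ≠ p) (u : U) :
    ∃ V : I → U, ∀ q, V (τ q) = (Pi.mulSingle p u : I → U) (τ q) * V q := by
  classical
  refine ⟨fun q => if ∃ r : ℕ, (τ ^ r) p = q then u else 1, fun q => ?_⟩
  by_cases hq : τ q = p
  · have hqr : ¬ ∃ r : ℕ, (τ ^ r) p = q := fun ⟨r, hr⟩ => hp r <| by
      rw [pow_succ', Equiv.Perm.mul_apply, hr, hq]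
    beta_reduce
    rw [if_pos ⟨0, hq.symm⟩, if_neg hqr, hq, Pi.mulSingle_eq_same, mul_one]
  · have horbit : (∃ r : ℕ, (τ ^ r) p = τ q) ↔ ∃ r : ℕ, (τ ^ r) p = q := by
      constructor
      · rintro ⟨_ | r, hr⟩
        · exact absurd hr.symm hq
        · exact ⟨r, τ.injective (by rw [← hr, pow_succ', Equiv.Perm.mul_apply])⟩
      · rintro ⟨r, rfl⟩
        exact ⟨r + 1, by rw [pow_succ', Equiv.Perm.mul_apply]⟩
    rw [Pi.mulSingle_eq_of_ne hq, one_mul]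
    exact if_congr horbit rfl rfl

/-- The action of `d : J → ℤ` on `J × ℤ` that translates the fibre over `j` by `d j`. -/
def fiberShift (J : Type*) : Multiplicative (J → ℤ) →* Equiv.Perm (J × ℤ) where
  toFun d := Equiv.prodShear (Equiv.refl J) fun j => Equiv.addRight (d.toAdd j)
  map_one' := Equiv.ext fun q => Prod.ext rfl (add_zero _)
  map_mul' d e := Equiv.ext fun q => Prod.ext rfl (by simp [add_comm, add_left_comm])

theorem fiberShift_ofAdd_apply {J : Type*} (d : J → ℤ) (q : J × ℤ) :
    fiberShift J (.ofAdd d) q = (q.1, q.2 + d q.1) :=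
  rfl

theorem fiberShift_ofAdd_pow_apply {J : Type*} (d : J → ℤ) (q : J × ℤ) (r : ℕ) :
    (fiberShift J (.ofAdd d) ^ r) q = (q.1, q.2 + r * d q.1) := by
  rw [← map_pow, ← ofAdd_nsmul, fiberShift_ofAdd_apply, Pi.smul_apply, nsmul_eq_mul]

/-! ### Orthonormal families -/

section OrthonormalFamilies

variable {𝕜 H : Type*} [RCLike 𝕜] [NormedAddCommGroup H] [InnerProductSpace 𝕜 H]
  {ι κ : Type*} {v w : ι → H}

theorem countable_of_orthonormal [SeparableSpace H] (hv : Orthonormal 𝕜 v) : Countable ι := by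
  refine Pairwise.countable_of_isOpen_disjoint (s := fun i => Metric.ball (v i) (1 / 2))
    (fun i j hij => Metric.ball_disjoint_ball ?_) (fun _ => Metric.isOpen_ball)
    (fun i => ⟨v i, Metric.mem_ball_self one_half_pos⟩)
  have hdist : ‖v i - v j‖ ^ 2 = 2 := by
    rw [@norm_sub_sq 𝕜, hv.2 hij, hv.1, hv.1, map_zero]
    norm_num
  rw [dist_eq_norm]
  nlinarith [norm_nonneg (v i - v j)]

theorem orthonormal_sumElim {w : κ → H} (hv : Orthonormal 𝕜 v) (hw : Orthonormal 𝕜 w)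
    (h : ∀ i j, ⟪v i, w j⟫_𝕜 = 0) : Orthonormal 𝕜 (Sum.elim v w) := by
  refine ⟨Sum.rec hv.1 hw.1, ?_⟩
  rintro (i | i) (j | j) hij
  · exact hv.2 fun e => hij (congrArg _ e)
  · exact h i j
  · exact inner_eq_zero_symm.1 (h j i)
  · exact hw.2 fun e => hij (congrArg _ e)

theorem mem_orthogonal_span_iff {s : Set H} {x : H} :
    x ∈ (Submodule.span 𝕜 s)ᗮ ↔ ∀ y ∈ s, ⟪y, x⟫_𝕜 = 0 := by
  rw [← Submodule.span_singleton_le_iff_mem, ← Submodule.isOrtho_iff_le, Submodule.isOrtho_comm,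
    Submodule.isOrtho_span]
  simp

theorem mem_orthogonal_span_range_iff {x : H} :
    x ∈ (Submodule.span 𝕜 (range v))ᗮ ↔ ∀ i, ⟪v i, x⟫_𝕜 = 0 := by
  rw [mem_orthogonal_span_iff, forall_mem_range]

theorem not_finiteDimensional_of_orthonormal [Infinite ι] (hv : Orthonormal 𝕜 v)
    {K : Submodule 𝕜 H} (hK : ∀ i, v i ∈ K) : ¬ FiniteDimensional 𝕜 K := fun _ =>
  have hli : LinearIndependent 𝕜 fun i => (⟨v i, hK i⟩ : K) :=
    .of_comp K.subtype hv.linearIndependent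
  have := hli.finite
  not_finite ι

theorem exists_norm_eq_one_mem_orthogonal {A : Submodule 𝕜 H} (hA : ¬ FiniteDimensional 𝕜 A)
    (L : Submodule 𝕜 H) [FiniteDimensional 𝕜 L] : ∃ y ∈ A, y ∈ Lᗮ ∧ ‖y‖ = 1 := by
  obtain ⟨z, hz, hz0⟩ : ∃ z ∈ A ⊓ Lᗮ, z ≠ 0 := by
    refine Submodule.exists_mem_ne_zero_of_ne_bot fun h => hA ?_
    refine FiniteDimensional.of_injective (L.orthogonalProjectionOnto.toLinearMap ∘ₗ A.subtype)
      ((injective_iff_map_eq_zero _).2 fun x hx => ?_)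
    have hxL : (x : H) ∈ A ⊓ Lᗮ := ⟨x.2, Submodule.orthogonalProjectionOnto_eq_zero_iff.1 hx⟩
    simpa [h] using hxL
  refine ⟨((‖z‖⁻¹ : ℝ) : 𝕜) • z, A.smul_mem _ hz.1, Lᗮ.smul_mem _ hz.2, ?_⟩
  rw [norm_smul, RCLike.norm_ofReal, abs_of_nonneg (by positivity),
    inv_mul_cancel₀ (norm_ne_zero_iff.2 hz0)]

/-- The vectors are chosen one at a time, orthogonally to all earlier `x`, `g x` and `g⁻¹ x`. -/
theorem exists_orthonormal_seq_inner_apply_eq_zero {A : Submodule 𝕜 H}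
    (hA : ¬ FiniteDimensional 𝕜 A) (g : H ≃ₗᵢ[𝕜] H) :
    ∃ x : ℕ → H, Orthonormal 𝕜 x ∧ (∀ n, x n ∈ A) ∧ ∀ m n, m ≠ n → ⟪x m, g (x n)⟫_𝕜 = 0 := by
  classical
  let r : H → H → Prop := fun y z => ⟪y, z⟫_𝕜 = 0 ∧ ⟪y, g z⟫_𝕜 = 0 ∧ ⟪z, g y⟫_𝕜 = 0
  have : Std.Symm r := ⟨fun y z h => ⟨inner_eq_zero_symm.1 h.1, h.2.2, h.2.1⟩⟩
  obtain ⟨x, hx, hxr⟩ := exists_seq_of_forall_finset_exists' (fun y => y ∈ A ∧ ‖y‖ = 1) r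
    fun s _ => by
      let L := Submodule.span 𝕜 ((s ∪ s.image g ∪ s.image g.symm : Finset H) : Set H)
      have : FiniteDimensional 𝕜 L := .span_of_finite 𝕜 (toFinite _)
      obtain ⟨y, hyA, hyL, hy⟩ := exists_norm_eq_one_mem_orthogonal hA L
      rw [mem_orthogonal_span_iff] at hyL
      refine ⟨y, ⟨hyA, hy⟩, fun x hx => ⟨hyL _ (by simp [hx]), ?_, ?_⟩⟩
      · rw [← g.symm.inner_map_map, g.symm_apply_apply]
        exact hyL _ (by simp [hx])
      · exact inner_eq_zero_symm.1 (hyL _ (by simp [hx]))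
  exact ⟨x, ⟨fun n => (hx n).2, fun m n h => (hxr h).1⟩, fun n => (hx n).1,
    fun m n h => (hxr h).2.1⟩

theorem not_finiteDimensional_orthogonal (hinf : ¬ FiniteDimensional 𝕜 H) (L : Submodule 𝕜 H)
    [FiniteDimensional 𝕜 L] : ¬ FiniteDimensional 𝕜 Lᗮ := fun _ => by
  have : FiniteDimensional 𝕜 (L ⊔ Lᗮ : Submodule 𝕜 H) := inferInstance
  rw [Submodule.sup_orthogonal_of_hasOrthogonalProjection] at this
  exact hinf Submodule.topEquiv.finiteDimensional

end OrthonormalFamilies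

section HilbertBases

variable {𝕜 H : Type*} [RCLike 𝕜] [NormedAddCommGroup H] [InnerProductSpace 𝕜 H]
  {ι κ : Type*}

theorem orthogonal_span_range_hilbertBasis (b : HilbertBasis ι 𝕜 H) :
    (Submodule.span 𝕜 (range b))ᗮ = ⊥ := by
  rw [Submodule.eq_bot_iff]
  intro x hx
  rw [mem_orthogonal_span_range_iff] at hx
  refine b.repr.map_eq_zero_iff.1 (lp.ext (funext fun i => ?_))
  rw [b.repr_apply_apply, hx]
  rfl

theorem exists_linearIsometryEquiv_hilbertBasis_apply {F : Type*} [NormedAddCommGroup F]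
    [InnerProductSpace 𝕜 F] (b : HilbertBasis ι 𝕜 H) (c : HilbertBasis ι 𝕜 F) :
    ∃ u : H ≃ₗᵢ[𝕜] F, ∀ i, u (b i) = c i := by
  classical
  refine ⟨b.repr.trans c.repr.symm, fun i => ?_⟩
  rw [LinearIsometryEquiv.trans_apply, b.repr_self, c.repr_symm_single]

theorem continuousLinearMap_ext_hilbertBasis {F : Type*} [NormedAddCommGroup F] [NormedSpace 𝕜 F]
    (b : HilbertBasis ι 𝕜 H) {f g : H →L[𝕜] F} (h : ∀ i, f (b i) = g (b i)) : f = g :=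
  ContinuousLinearMap.ext_on (s := range b)
    (Submodule.dense_iff_topologicalClosure_eq_top.2 b.dense_span) (forall_mem_range.2 h)

variable [CompleteSpace H]

theorem exists_hilbertBasis_reindex (b : HilbertBasis ι 𝕜 H) (e : κ ≃ ι) :
    ∃ c : HilbertBasis κ 𝕜 H, ∀ k, c k = b (e k) := by
  have h : (Submodule.span 𝕜 (range (b ∘ e)))ᗮ = ⊥ := by
    rw [e.surjective.range_comp, orthogonal_span_range_hilbertBasis]
  exact ⟨HilbertBasis.mkOfOrthogonalEqBot (b.orthonormal.comp e e.injective) h, fun k => by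
    rw [HilbertBasis.coe_mkOfOrthogonalEqBot, Function.comp_apply]⟩

variable [SeparableSpace H]

theorem nonempty_hilbertBasis_of_countable_of_infinite (ι : Type*) [Countable ι] [Infinite ι]
    (hinf : ¬ FiniteDimensional 𝕜 H) : Nonempty (HilbertBasis ι 𝕜 H) := by
  obtain ⟨w, b, -⟩ := exists_hilbertBasis 𝕜 H
  have : Countable w := countable_of_orthonormal b.orthonormal
  have : Infinite w := not_finite_iff_infinite.1 fun hfin =>
    have := Fintype.ofFinite w
    hinf b.toOrthonormalBasis.toBasis.finiteDimensional_of_finite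
  obtain ⟨e⟩ := nonempty_equiv_of_countable (α := ι) (β := w)
  exact (exists_hilbertBasis_reindex b e).nonempty

theorem exists_hilbertBasis_sum_nat {v : ι → H} (hv : Orthonormal 𝕜 v)
    (hinf : ¬ FiniteDimensional 𝕜 (Submodule.span 𝕜 (range v))ᗮ) :
    ∃ b : HilbertBasis (ι ⊕ ℕ) 𝕜 H, ∀ i, b (Sum.inl i) = v i := by
  set K := (Submodule.span 𝕜 (range v))ᗮ
  obtain ⟨e⟩ := nonempty_hilbertBasis_of_countable_of_infinite ℕ hinf
  have ho : Orthonormal 𝕜 (Sum.elim v fun n => (e n : H)) :=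
    orthonormal_sumElim hv (e.orthonormal.comp_linearIsometry K.subtypeₗᵢ)
      fun i j => mem_orthogonal_span_range_iff.1 (e j).2 i
  refine ⟨HilbertBasis.mkOfOrthogonalEqBot ho ((Submodule.eq_bot_iff _).2 fun x hx => ?_),
    fun i => by rw [HilbertBasis.coe_mkOfOrthogonalEqBot, Sum.elim_inl]⟩
  rw [mem_orthogonal_span_range_iff] at hx
  have hxK : x ∈ K := mem_orthogonal_span_range_iff.2 fun i => hx (Sum.inl i)
  have hxe : (⟨x, hxK⟩ : K) ∈ (Submodule.span 𝕜 (range e))ᗮ :=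
    mem_orthogonal_span_range_iff.2 fun n => hx (Sum.inr n)
  rw [orthogonal_span_range_hilbertBasis] at hxe
  simpa using hxe

theorem exists_linearIsometryEquiv_apply_eq {v w : ι → H} {r s : ℕ → H}
    (hv : Orthonormal 𝕜 (Sum.elim v r)) (hw : Orthonormal 𝕜 (Sum.elim w s)) :
    ∃ u : H ≃ₗᵢ[𝕜] H, ∀ i, u (v i) = w i := by
  have hinf {v : ι → H} {r : ℕ → H} (h : Orthonormal 𝕜 (Sum.elim v r)) :
      ¬ FiniteDimensional 𝕜 (Submodule.span 𝕜 (range v))ᗮ :=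
    not_finiteDimensional_of_orthonormal (h.comp Sum.inr Sum.inr_injective) fun n =>
      mem_orthogonal_span_range_iff.2 fun i => h.2 (Sum.inl_ne_inr (a := i) (b := n))
  obtain ⟨b, hb⟩ :=
    exists_hilbertBasis_sum_nat (v := v) (hv.comp Sum.inl Sum.inl_injective) (hinf hv)
  obtain ⟨c, hc⟩ :=
    exists_hilbertBasis_sum_nat (v := w) (hw.comp Sum.inl Sum.inl_injective) (hinf hw)
  obtain ⟨u, hu⟩ := exists_linearIsometryEquiv_hilbertBasis_apply b c
  exact ⟨u, fun i => by rw [← hb, hu, hc]⟩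

end HilbertBases

/-! ### Fixators and Hilbert sums -/

section Fixator

variable {𝕜 H : Type*} [RCLike 𝕜] [NormedAddCommGroup H] [InnerProductSpace 𝕜 H]

/-- The pointwise stabilizer of a set of vectors in the unitary group. -/
def fixator (𝕜 : Type*) {H : Type*} [RCLike 𝕜] [NormedAddCommGroup H] [InnerProductSpace 𝕜 H]
    (s : Set H) : Subgroup (H ≃ₗᵢ[𝕜] H) where
  carrier := {g | ∀ x ∈ s, g x = x}
  mul_mem' {g _} hg hh x hx := (congrArg g (hh x hx)).trans (hg x hx)
  one_mem' _ _ := rfl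
  inv_mem' {g} hg x hx := g.symm_apply_eq.2 (hg x hx).symm

theorem mem_fixator_iff {s : Set H} {g : H ≃ₗᵢ[𝕜] H} : g ∈ fixator 𝕜 s ↔ ∀ x ∈ s, g x = x :=
  Iff.rfl

theorem mem_fixator_image_iff {ι : Type*} {v : ι → H} {s : Set ι} {g : H ≃ₗᵢ[𝕜] H} :
    g ∈ fixator 𝕜 (v '' s) ↔ ∀ i ∈ s, g (v i) = v i :=
  forall_mem_image

theorem fixator_anti : Antitone (fixator 𝕜 : Set H → Subgroup (H ≃ₗᵢ[𝕜] H)) :=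
  fun _ _ h _ hg x hx => hg x (h hx)

theorem conj_mem_fixator_iff {s : Set H} (u g : H ≃ₗᵢ[𝕜] H) :
    u⁻¹ * g * u ∈ fixator 𝕜 s ↔ g ∈ fixator 𝕜 (u '' s) := by
  rw [mem_fixator_iff, mem_fixator_iff, forall_mem_image]
  exact forall₂_congr fun x _ => u.symm_apply_eq

theorem map_eq_self_of_hasSum {ι : Type*} {f : ι → H} {x : H} (hf : HasSum f x)
    {g : H ≃ₗᵢ[𝕜] H} (hg : ∀ i, g (f i) = f i) : g x = x := by
  have h : HasSum (fun i => g (f i)) (g x) := hf.mapL (g : H →L[𝕜] H)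
  simp only [hg] at h
  exact h.unique hf

end Fixator

section HilbertSum

variable {𝕜 H I Y : Type*} [RCLike 𝕜] [NormedAddCommGroup H] [InnerProductSpace 𝕜 H]
  [CompleteSpace H] [NormedAddCommGroup Y] [InnerProductSpace 𝕜 Y] {T : I → Y →ₗᵢ[𝕜] H}

theorem hasSum_isHilbertSum (hT : IsHilbertSum 𝕜 (fun _ => Y) T) (x : H) :
    HasSum (fun q => T q (hT.linearIsometryEquiv x q)) x := by
  simpa only [LinearIsometryEquiv.symm_apply_apply] using
    hT.hasSum_linearIsometryEquiv_symm (hT.linearIsometryEquiv x)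

theorem inner_apply_isHilbertSum (hT : IsHilbertSum 𝕜 (fun _ => Y) T) (q : I) (y : Y) (x : H) :
    ⟪T q y, x⟫_𝕜 = ⟪y, hT.linearIsometryEquiv x q⟫_𝕜 := by
  classical
  rw [← hT.linearIsometryEquiv_symm_apply_single, ← hT.linearIsometryEquiv.inner_map_map,
    LinearIsometryEquiv.apply_symm_apply, lp.inner_single_left]

theorem isHilbertSum_coord_eq_zero (hT : IsHilbertSum 𝕜 (fun _ => Y) T) {q : I} {x : H}
    (hx : ∀ y, ⟪T q y, x⟫_𝕜 = 0) : hT.linearIsometryEquiv x q = 0 :=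
  ext_inner_left 𝕜 fun y => by rw [← inner_apply_isHilbertSum, hx, inner_zero_right]

theorem isHilbertSum_apply_eq_self (hT : IsHilbertSum 𝕜 (fun _ => Y) T) {s : Set I}
    {g : H ≃ₗᵢ[𝕜] H} (hg : ∀ q ∈ s, ∀ y, g (T q y) = T q y) {x : H}
    (hx : ∀ q ∉ s, ∀ y, ⟪T q y, x⟫_𝕜 = 0) : g x = x := by
  refine map_eq_self_of_hasSum (hasSum_isHilbertSum hT x) fun q => ?_
  by_cases hq : q ∈ s
  · exact hg q hq _
  · rw [isHilbertSum_coord_eq_zero hT (hx q hq), map_zero, map_zero]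

theorem isHilbertSum_unitary_ext (hT : IsHilbertSum 𝕜 (fun _ => Y) T) {u v : H ≃ₗᵢ[𝕜] H}
    (h : ∀ q y, u (T q y) = v (T q y)) : u = v := by
  refine (inv_mul_eq_one.1 (LinearIsometryEquiv.ext fun x => ?_)).symm
  exact isHilbertSum_apply_eq_self hT (s := univ) (g := v⁻¹ * u)
    (fun q _ y => v.symm_apply_eq.2 (h q y)) fun q hq => (hq trivial).elim

theorem mem_range_isHilbertSum_iff (hT : IsHilbertSum 𝕜 (fun _ => Y) T) {p : I} {x : H} :
    x ∈ LinearMap.range (T p).toLinearMap ↔ ∀ q ≠ p, ∀ y, ⟪T q y, x⟫_𝕜 = 0 := by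
  constructor
  · rintro ⟨z, rfl⟩ q hq y
    exact hT.OrthogonalFamily hq y z
  · intro hx
    have h := hasSum_single p (f := fun q => T q (hT.linearIsometryEquiv x q)) fun q hq => by
      rw [isHilbertSum_coord_eq_zero hT (hx q hq), map_zero]
    exact ⟨_, h.unique (hasSum_isHilbertSum hT x)⟩

theorem exists_apply_isHilbertSum_eq (hT : IsHilbertSum 𝕜 (fun _ => Y) T) {p : I}
    {k : H ≃ₗᵢ[𝕜] H} (hk : ∀ q ≠ p, ∀ y, k (T q y) = T q y) :
    ∃ u : Y ≃ₗᵢ[𝕜] Y, ∀ y, k (T p y) = T p (u y) := by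
  set R := LinearMap.range (T p).toLinearMap
  have hmem : ∀ x, k x ∈ R ↔ x ∈ R := fun x => by
    rw [mem_range_isHilbertSum_iff hT, mem_range_isHilbertSum_iff hT]
    refine forall₃_congr fun q hq y => ?_
    rw [← hk q hq y, k.inner_map_map, hk q hq y]
  have hmap : R.map k.toLinearEquiv.toLinearMap = R := by
    refine le_antisymm (Submodule.map_le_iff_le_comap.2 fun x => (hmem x).2) fun x hx =>
      ⟨k.symm x, (hmem _).1 (by simpa using hx), k.apply_symm_apply x⟩
  let e := (T p).equivRange
  let kR := (k.submoduleMap R).trans (LinearIsometryEquiv.ofEq _ _ hmap)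
  exact ⟨e.trans (kR.trans e.symm),
    fun y => congrArg Subtype.val (e.apply_symm_apply (kR (e y))).symm⟩

theorem isHilbertSum_comp [CompleteSpace Y] (hT : IsHilbertSum 𝕜 (fun _ => Y) T)
    (σ : Equiv.Perm I) (V : I → Y ≃ₗᵢ[𝕜] Y) :
    IsHilbertSum 𝕜 (fun _ => Y) fun q => (T (σ q)).comp (V q).toLinearIsometry := by
  refine .mk (fun q q' h y y' => hT.OrthogonalFamily (σ.injective.ne h) _ _) (top_le_iff.2 ?_)
  have hrange q : LinearMap.range ((T (σ q)).comp (V q).toLinearIsometry).toLinearMap =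
      LinearMap.range (T (σ q)).toLinearMap :=
    LinearMap.range_comp_of_range_eq_top _ (LinearMap.range_eq_top.2 (V q).surjective)
  rw [iSup_congr hrange, σ.iSup_comp (g := fun q => LinearMap.range (T q).toLinearMap),
    ← hT.OrthogonalFamily.range_linearIsometry]
  exact LinearMap.range_eq_top.2 hT.surjective_isometry

theorem exists_unitary_apply_isHilbertSum [CompleteSpace Y] (hT : IsHilbertSum 𝕜 (fun _ => Y) T)
    (σ : Equiv.Perm I) (V : I → Y ≃ₗᵢ[𝕜] Y) :
    ∃ u : H ≃ₗᵢ[𝕜] H, ∀ q y, u (T q y) = T (σ q) (V q y) := by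
  classical
  have hT' := isHilbertSum_comp hT σ V
  refine ⟨hT.linearIsometryEquiv.trans hT'.linearIsometryEquiv.symm, fun q y => ?_⟩
  rw [LinearIsometryEquiv.trans_apply, ← hT.linearIsometryEquiv_symm_apply_single y,
    LinearIsometryEquiv.apply_symm_apply, hT'.linearIsometryEquiv_symm_apply_single]
  rfl

/-- The unitary representation of permutations of the summands of a Hilbert sum of copies of one
space. -/
noncomputable def summandPermutation [CompleteSpace Y] (hT : IsHilbertSum 𝕜 (fun _ => Y) T) :
    Equiv.Perm I →* (H ≃ₗᵢ[𝕜] H) :=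
  .mk' (fun σ => (exists_unitary_apply_isHilbertSum hT σ fun _ => 1).choose) fun σ τ =>
    isHilbertSum_unitary_ext hT fun q y => by
      have hu σ := (exists_unitary_apply_isHilbertSum hT σ fun _ => 1).choose_spec
      rw [LinearIsometryEquiv.coe_mul, Function.comp_apply, hu, hu, hu]
      rfl

theorem summandPermutation_apply [CompleteSpace Y] (hT : IsHilbertSum 𝕜 (fun _ => Y) T)
    (σ : Equiv.Perm I) (q : I) (y : Y) : summandPermutation hT σ (T q y) = T (σ q) y :=
  (exists_unitary_apply_isHilbertSum hT σ fun _ => 1).choose_spec q y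

theorem exists_unitary_hilbertBasis_apply {ι : Type*} (b : HilbertBasis ι 𝕜 H) :
    ∃ φ : Equiv.Perm ι →* (H ≃ₗᵢ[𝕜] H), ∀ σ i, φ σ (b i) = b (σ i) := by
  have hb := b.orthonormal.isHilbertSum (b.dense_span.ge)
  refine ⟨summandPermutation hb, fun σ i => ?_⟩
  simpa using summandPermutation_apply hb σ i 1

theorem isHilbertSum_comp_lsingle [DecidableEq I] (Ψ : lp (fun _ : I => Y) 2 ≃ₗᵢ[𝕜] H) :
    IsHilbertSum 𝕜 (fun _ => Y) fun q =>
      Ψ.toLinearIsometry.comp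
        ⟨lp.lsingle (E := fun _ : I => Y) 2 q, lp.norm_single (E := fun _ => Y) two_pos q⟩ := by
  refine ⟨fun q q' h y y' => ?_, fun x => ?_⟩
  · change ⟪Ψ (lp.single 2 q y), Ψ (lp.single 2 q' y')⟫_𝕜 = 0
    rw [Ψ.inner_map_map, lp.inner_single_left, lp.single_apply_ne _ _ _ h, inner_zero_right]
  · have hsum : HasSum (fun q => Ψ (lp.single 2 q (Ψ.symm x q))) x := by
      simpa using (lp.hasSum_single ENNReal.ofNat_ne_top (Ψ.symm x)).mapL (Ψ : _ →L[𝕜] H)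
    exact ⟨Ψ.symm x, (OrthogonalFamily.hasSum_linearIsometry _ _).unique hsum⟩

theorem exists_hilbertBasis_lp {J : Type*} [DecidableEq I] [CompleteSpace Y]
    (b : HilbertBasis J 𝕜 Y) :
    ∃ c : HilbertBasis (I × J) 𝕜 (lp (fun _ : I => Y) 2),
      ∀ q j, c (q, j) = lp.single 2 q (b j) := by
  let v (p : I × J) : lp (fun _ : I => Y) 2 := lp.single 2 p.1 (b p.2)
  have hv : Orthonormal 𝕜 v := by
    refine ⟨fun p => (lp.norm_single two_pos _ _).trans (b.orthonormal.1 p.2), ?_⟩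
    rintro ⟨q, j⟩ ⟨q', j'⟩ h
    rw [lp.inner_single_left]
    by_cases hq : q = q'
    · subst hq
      rw [lp.single_apply_self]
      exact b.orthonormal.2 fun hj => h (Prod.ext rfl hj)
    · rw [lp.single_apply_ne _ _ _ hq, inner_zero_right]
  refine ⟨.mkOfOrthogonalEqBot hv ((Submodule.eq_bot_iff _).2 fun x hx => ?_), fun q j => by
    rw [HilbertBasis.coe_mkOfOrthogonalEqBot]⟩
  rw [mem_orthogonal_span_range_iff] at hx
  refine lp.ext (funext fun q => ?_)
  have hxq : x q ∈ (Submodule.span 𝕜 (range b))ᗮ := mem_orthogonal_span_range_iff.2 fun j =>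
    (lp.inner_single_left q (b j) x).symm.trans (hx (q, j))
  rwa [orthogonal_span_range_hilbertBasis] at hxq

theorem exists_isHilbertSum_apply_eq {J : Type*} [CompleteSpace Y] (b : HilbertBasis (I × J) 𝕜 H)
    (b₀ : HilbertBasis J 𝕜 Y) :
    ∃ T : I → Y →ₗᵢ[𝕜] H, IsHilbertSum 𝕜 (fun _ => Y) T ∧ ∀ q j, T q (b₀ j) = b (q, j) := by
  classical
  obtain ⟨c, hc⟩ := exists_hilbertBasis_lp (I := I) b₀
  obtain ⟨Ψ, hΨ⟩ := exists_linearIsometryEquiv_hilbertBasis_apply c b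
  refine ⟨_, isHilbertSum_comp_lsingle Ψ, fun q j => ?_⟩
  rw [← hΨ, hc]
  rfl

end HilbertSum

/-! ### Small unitaries of a block -/

section Blocks

variable {𝕜 H I Y : Type*} [RCLike 𝕜] [NormedAddCommGroup H] [InnerProductSpace 𝕜 H]
  [CompleteSpace H] [NormedAddCommGroup Y] [InnerProductSpace 𝕜 Y] [CompleteSpace Y]
  {ℓ : GroupSeminorm (H ≃ₗᵢ[𝕜] H)}

/-- A diagonal argument: otherwise each `s n` of a dense sequence would miss some prescription on
the `n`-th block, but all these prescriptions are realized by a single unitary. -/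
theorem IsSeparableGroupSeminorm.exists_block_prescribed (hℓ : IsSeparableGroupSeminorm ℓ)
    {T : I → Y →ₗᵢ[𝕜] H} (hT : IsHilbertSum 𝕜 (fun _ => Y) T) (block : I → ℕ) {δ : ℝ}
    (hδ : 0 < δ) :
    ∃ n, ∀ V : I → Y ≃ₗᵢ[𝕜] Y, ∃ f, ℓ f < δ ∧
      ∀ q, block q = n → ∀ y, f (T q y) = T q (V q y) := by
  obtain ⟨s, hs⟩ := hℓ (δ / 2) (half_pos hδ)
  obtain ⟨n, hn⟩ : ∃ n, ∀ V : I → Y ≃ₗᵢ[𝕜] Y, ∃ f, ℓ ((s n)⁻¹ * f) < δ / 2 ∧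
      ∀ q, block q = n → ∀ y, f (T q y) = T q (V q y) := by
    by_contra! h
    choose V hV using h
    obtain ⟨f, hf⟩ := exists_unitary_apply_isHilbertSum hT (Equiv.refl _) fun q => V (block q) q
    obtain ⟨n, hn⟩ := hs f
    obtain ⟨q, rfl, y, hy⟩ := hV n f hn
    exact hy (hf q y)
  refine ⟨n, fun V => ?_⟩
  obtain ⟨f₁, hf₁, h₁⟩ := hn fun _ => 1
  obtain ⟨f, hf, h⟩ := hn V
  refine ⟨f₁⁻¹ * f, ?_, fun q hq y => ?_⟩
  · calc ℓ (f₁⁻¹ * f) = ℓ (((s n)⁻¹ * f₁)⁻¹ * ((s n)⁻¹ * f)) := by group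
      _ ≤ ℓ ((s n)⁻¹ * f₁) + ℓ ((s n)⁻¹ * f) := by grw [map_mul_le_add, map_inv_eq_map]
      _ < δ := by linarith
  · rw [LinearIsometryEquiv.coe_mul, Function.comp_apply, h q hq]
    exact f₁.symm_apply_eq.2 (h₁ q hq _).symm

open scoped commutatorElement in
theorem commutatorElement_summandPermutation_eq [DecidableEq I] {T : I → Y →ₗᵢ[𝕜] H}
    (hT : IsHilbertSum 𝕜 (fun _ => Y) T) {s : Set I} {p : I} (hp : p ∈ s) {σ : Equiv.Perm I}
    (hσ : ∀ q ∉ s, σ q = q) {u : Y ≃ₗᵢ[𝕜] Y} {V : I → Y ≃ₗᵢ[𝕜] Y}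
    (hV : ∀ q, V (σ q) = (Pi.mulSingle p u : I → Y ≃ₗᵢ[𝕜] Y) (σ q) * V q)
    {f k : H ≃ₗᵢ[𝕜] H} (hf : ∀ q ∈ s, ∀ y, f (T q y) = T q (V q y))
    (hk : ∀ q y, k (T q y) = T q ((Pi.mulSingle p u : I → Y ≃ₗᵢ[𝕜] Y) q y)) :
    ⁅f, summandPermutation hT σ⁆ = k := by
  set h := summandPermutation hT σ
  have hh : ∀ q y, h (T q y) = T (σ q) y := summandPermutation_apply hT σ
  suffices hcomm : f * h = k * h * f by
    rw [commutatorElement_def, hcomm, mul_inv_cancel_right, mul_inv_cancel_right]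
  refine isHilbertSum_unitary_ext hT fun q y => ?_
  simp only [LinearIsometryEquiv.coe_mul, Function.comp_apply]
  by_cases hq : q ∈ s
  · have hσq : σ q ∈ s := by_contra fun hσq => hσq (by rwa [σ.injective (hσ _ hσq)])
    rw [hf q hq, hh, hf _ hσq, hh, hk, hV]
    rfl
  · have horth : ∀ q' ∉ sᶜ, ∀ y', ⟪T q' y', f (T q y)⟫_𝕜 = 0 := fun q' hq' y' => by
      have hq' : q' ∈ s := not_not.1 hq'
      rw [← (V q').apply_symm_apply y', ← hf q' hq', f.inner_map_map]
      exact hT.OrthogonalFamily (ne_of_mem_of_not_mem hq' hq) _ _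
    rw [hh, hσ q hq,
      isHilbertSum_apply_eq_self hT (fun q' hq' y' => by rw [hh, hσ q' hq']) horth,
      isHilbertSum_apply_eq_self hT (fun q' hq' y' => ?_) horth]
    rw [hk, Pi.mulSingle_eq_of_ne (ne_of_mem_of_not_mem hp hq').symm]
    rfl

omit [CompleteSpace H] in
theorem IsSeparableGroupSeminorm.exists_fiberShift_block_lt (hℓ : IsSeparableGroupSeminorm ℓ)
    (φ : Equiv.Perm ((ℕ × ℕ) × ℤ) →* (H ≃ₗᵢ[𝕜] H)) (n : ℕ) {δ : ℝ} (hδ : 0 < δ) :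
    ∃ d : ℕ × ℕ → ℤ, (∀ j, j.1 ≠ n → d j = 0) ∧ (∃ m, d (n, m) ≠ 0) ∧
      ℓ (φ (fiberShift _ (.ofAdd d))) < δ := by
  let extend : (ℕ → ℤ) →+ (ℕ × ℕ → ℤ) :=
    .mk' (fun d j => if j.1 = n then d j.2 else 0) fun d e => by
      ext j
      by_cases hj : j.1 = n <;> simp [hj]
  obtain ⟨d, hd, hlt⟩ := hℓ.exists_eventually_ne_zero_lt
    ((φ.comp (fiberShift _)).comp (AddMonoidHom.toMultiplicative extend)) hδ
  obtain ⟨m, hm⟩ := hd.exists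
  exact ⟨extend d, fun j hj => if_neg hj, ⟨m, by simpa [extend] using hm⟩, hlt⟩

/-- Every unitary supported on a suitable summand is a commutator of two elements of small length:
a shift of the summands, and a unitary acting along the orbit of that summand. -/
theorem IsSeparableGroupSeminorm.exists_summand_lt (hℓ : IsSeparableGroupSeminorm ℓ)
    {T : (ℕ × ℕ) × ℤ → Y →ₗᵢ[𝕜] H} (hT : IsHilbertSum 𝕜 (fun _ => Y) T) {δ : ℝ} (hδ : 0 < δ) :
    ∃ p, ∀ k : H ≃ₗᵢ[𝕜] H, (∀ q ≠ p, ∀ y, k (T q y) = T q y) → ℓ k < δ := by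
  have hδ' : 0 < δ / 4 := by positivity
  obtain ⟨n, hn⟩ := hℓ.exists_block_prescribed hT (fun q => q.1.1) hδ'
  obtain ⟨d, hd, ⟨m, hm⟩, hlt⟩ := hℓ.exists_fiberShift_block_lt (summandPermutation hT) n hδ'
  set σ := fiberShift _ (.ofAdd d)
  refine ⟨((n, m), 0), fun k hk => ?_⟩
  obtain ⟨u, hu⟩ := exists_apply_isHilbertSum_eq hT hk
  obtain ⟨V, hV⟩ := exists_apply_eq_mulSingle_mul σ (p := ((n, m), 0))
    (fun r => by
      rw [fiberShift_ofAdd_pow_apply, Ne, Prod.ext_iff, not_and]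
      intro _
      simpa [hm] using r.cast_add_one_ne_zero (R := ℤ)) u
  obtain ⟨f, hfδ, hf⟩ := hn V
  have hk' q y : k (T q y) = T q ((Pi.mulSingle ((n, m), 0) u : _ → Y ≃ₗᵢ[𝕜] Y) q y) := by
    by_cases hq : q = ((n, m), 0)
    · rw [hq, Pi.mulSingle_eq_same, hu]
    · rw [Pi.mulSingle_eq_of_ne hq, hk q hq]
      rfl
  have hσ : ∀ q ∉ {q : (ℕ × ℕ) × ℤ | q.1.1 = n}, σ q = q := fun q hq => by
    rw [fiberShift_ofAdd_apply, hd _ hq, add_zero]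
  rw [← commutatorElement_summandPermutation_eq hT (by exact rfl) hσ hV hf hk']
  linarith [groupSeminorm_commutatorElement_le ℓ f (summandPermutation hT σ)]

theorem IsSeparableGroupSeminorm.exists_fixator_image_lt (hℓ : IsSeparableGroupSeminorm ℓ)
    {ι : Type*} [Countable ι] [Infinite ι] (b : HilbertBasis ι 𝕜 H) {δ : ℝ} (hδ : 0 < δ) :
    ∃ s : Set ι, s.Infinite ∧ sᶜ.Infinite ∧ ∀ g ∈ fixator 𝕜 (b '' s), ℓ g < δ := by
  obtain ⟨e⟩ := nonempty_equiv_of_countable (α := ((ℕ × ℕ) × ℤ) × ℕ) (β := ι)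
  obtain ⟨c, hc⟩ := exists_hilbertBasis_reindex b e
  let b₀ : HilbertBasis ℕ 𝕜 (lp (fun _ : ℕ => 𝕜) 2) := .ofRepr (.refl _ _)
  obtain ⟨T, hT, hTc⟩ := exists_isHilbertSum_apply_eq c b₀
  obtain ⟨p, hp⟩ := hℓ.exists_summand_lt hT hδ
  have hfiber q : (e '' {x | x.1 = q}).Infinite :=
    .image e.injective.injOn <| (infinite_range_of_injective (Prod.mk_right_injective q)).mono
      (range_subset_iff.2 fun _ => rfl)
  obtain ⟨p', hp'⟩ := exists_ne p
  refine ⟨e '' {x | x.1 ≠ p}, (hfiber p').mono (image_mono fun x hx => hx.trans_ne hp'), ?_,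
    fun g hg => hp g fun q hq y => ?_⟩
  · rw [← image_compl_eq e.bijective]
    exact (hfiber p).mono (image_mono fun x hx => not_not.2 hx)
  · refine DFunLike.congr_fun (continuousLinearMap_ext_hilbertBasis b₀
      (f := (g : H →L[𝕜] H) ∘L (T q).toContinuousLinearMap)
      (g := (T q).toContinuousLinearMap) fun j => ?_) y
    change g (T q (b₀ j)) = T q (b₀ j)
    rw [hTc, hc]
    exact mem_fixator_image_iff.1 hg _ (mem_image_of_mem e hq)

end Blocks

/-! ### Generating the fixator of a finite set -/

section InfiniteSets

variable {J J' : Type*}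

theorem exists_disjoint_infinite_union_eq {s : Set J} (hs : s.Infinite) :
    ∃ p q : Set J, p ∪ q = s ∧ Disjoint p q ∧ p.Infinite ∧ q.Infinite := by
  obtain ⟨p, q, rfl, hpq, hcard⟩ := hs.exists_union_disjoint_cardinal_eq_of_infinite
  obtain ⟨e⟩ := Cardinal.eq.1 hcard
  have hiff : p.Finite ↔ q.Finite := e.finite_iff
  rw [infinite_union] at hs
  exact ⟨p, q, rfl, hpq, fun h => hs.elim (· h) (· (hiff.1 h)),
    fun h => hs.elim (· (hiff.2 h)) (· h)⟩

variable [Countable J]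

theorem exists_injective_range_eq {s : Set J} (hs : s.Infinite) :
    ∃ f : ℕ → J, f.Injective ∧ range f = s := by
  have := hs.to_subtype
  obtain ⟨e⟩ := nonempty_equiv_of_countable (α := ℕ) (β := s)
  exact ⟨_, Subtype.val_injective.comp e.injective, by simp⟩

theorem exists_equiv_mem_iff_mem [Countable J'] {s : Set J} {t : Set J'}
    (hs : s.Infinite) (hs' : sᶜ.Infinite) (ht : t.Infinite) (ht' : tᶜ.Infinite) :
    ∃ e : J ≃ J', ∀ j, e j ∈ t ↔ j ∈ s := by
  classical
  have := hs.to_subtype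
  have := hs'.to_subtype
  have := ht.to_subtype
  have := ht'.to_subtype
  obtain ⟨e⟩ := nonempty_equiv_of_countable (α := s) (β := t)
  obtain ⟨e'⟩ := nonempty_equiv_of_countable (α := ↥sᶜ) (β := ↥tᶜ)
  refine ⟨(Equiv.Set.sumCompl s).symm.trans ((e.sumCongr e').trans (Equiv.Set.sumCompl t)),
    fun j => ?_⟩
  by_cases hj : j ∈ s
  · simp [hj, Equiv.Set.sumCompl_symm_apply_of_mem hj]
  · have hmem : (e' ⟨j, hj⟩ : J') ∉ t := (e' ⟨j, hj⟩).2
    simpa [hj, Equiv.Set.sumCompl_symm_apply_of_notMem hj] using hmem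

end InfiniteSets

section Generation

variable {𝕜 H J : Type*} [RCLike 𝕜] [NormedAddCommGroup H] [InnerProductSpace 𝕜 H]

theorem le_of_mem_fixator_image {ℓ : GroupSeminorm (H ≃ₗᵢ[𝕜] H)} {s : Set H} {K : ℝ}
    (hs : ∀ g ∈ fixator 𝕜 s, ℓ g ≤ K) (u : H ≃ₗᵢ[𝕜] H) {g : H ≃ₗᵢ[𝕜] H}
    (hg : g ∈ fixator 𝕜 (u '' s)) : ℓ g ≤ K + 2 * ℓ u :=
  calc ℓ g = ℓ (u * (u⁻¹ * g * u) * u⁻¹) := by group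
    _ ≤ ℓ (u⁻¹ * g * u) + 2 * ℓ u := groupSeminorm_conj_le ℓ _ _
    _ ≤ K + 2 * ℓ u := by grw [hs _ ((conj_mem_fixator_iff u g).2 hg)]

variable [CompleteSpace H] [SeparableSpace H]

theorem exists_mem_fixator_image_apply_eq {ι : Type*} {b : J → H} (hb : Orthonormal 𝕜 b) {s : Set J}
    {v w : ι → H} {r r' : ℕ → H} (hv : Orthonormal 𝕜 (Sum.elim v r))
    (hw : Orthonormal 𝕜 (Sum.elim w r')) (hbv : ∀ j ∈ s, ∀ i, ⟪b j, Sum.elim v r i⟫_𝕜 = 0)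
    (hbw : ∀ j ∈ s, ∀ i, ⟪b j, Sum.elim w r' i⟫_𝕜 = 0) :
    ∃ u ∈ fixator 𝕜 (b '' s), ∀ i, u (v i) = w i := by
  have h {v : ι → H} {r : ℕ → H} (hv : Orthonormal 𝕜 (Sum.elim v r))
      (hbv : ∀ j ∈ s, ∀ i, ⟪b j, Sum.elim v r i⟫_𝕜 = 0) :
      Orthonormal 𝕜 (Sum.elim (Sum.elim (fun j : s => b j) v) r) := by
    convert (orthonormal_sumElim (hb.comp _ Subtype.val_injective) hv
      fun j => hbv j j.2).comp _ (Equiv.sumAssoc s ι ℕ).injective using 1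
    ext ((i | i) | i) <;> rfl
  obtain ⟨u, hu⟩ := exists_linearIsometryEquiv_apply_eq (h hv hbv) (h hw hbw)
  exact ⟨u, mem_fixator_image_iff.2 fun j hj => hu (.inl ⟨j, hj⟩), fun i => hu (.inr i)⟩

variable (b : HilbertBasis J 𝕜 H) {s t p q : Set J}

theorem exists_mem_fixator_image_apply_hilbertBasis_eq {y : ℕ → H} (hy : Orthonormal 𝕜 y)
    (hp : p.Infinite) (hpt : Disjoint p t) (hyb : ∀ j ∈ t ∪ p, ∀ n, ⟪b j, y n⟫_𝕜 = 0) {f : ℕ → J}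
    (hf : f.Injective) (hft : ∀ n, f n ∉ t ∪ p) :
    ∃ u ∈ fixator 𝕜 (b '' t), ∀ n, u (y n) = b (f n) := by
  have := countable_of_orthonormal b.orthonormal
  obtain ⟨d, hd, rfl⟩ := exists_injective_range_eq hp
  have hdt n : d n ∉ t := disjoint_left.1 hpt (mem_range_self n)
  have hfd m n : f m ≠ d n := fun h => hft m (h ▸ .inr (mem_range_self n))
  have hbd := b.orthonormal.comp d hd
  refine exists_mem_fixator_image_apply_eq b.orthonormal (r := b ∘ d) (r' := b ∘ d)
    (orthonormal_sumElim hy hbd fun m n =>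
      inner_eq_zero_symm.1 (hyb _ (.inr (mem_range_self n)) m))
    (orthonormal_sumElim (b.orthonormal.comp f hf) hbd fun m n => b.orthonormal.2 (hfd m n))
    (fun j hj => Sum.rec (hyb j (.inl hj)) fun n => ?_)
    (fun j hj => Sum.rec (fun n => ?_) fun n => ?_)
  · exact b.orthonormal.2 (ne_of_mem_of_not_mem hj (hdt n))
  · exact b.orthonormal.2 (ne_of_mem_of_not_mem hj fun h => hft n (.inl h))
  · exact b.orthonormal.2 (ne_of_mem_of_not_mem hj (hdt n))

theorem exists_mem_fixator_image_inner_eq_zero (hp : p.Infinite) (hq : q.Infinite)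
    (hpq : Disjoint p q) (hps : Disjoint p s) (hqst : Disjoint q (s ∪ t)) {g : H ≃ₗᵢ[𝕜] H}
    (hg : g ∈ fixator 𝕜 (b '' (s ∩ t))) :
    ∃ a ∈ fixator 𝕜 (b '' s), ∃ e : ℕ → H, Orthonormal 𝕜 e ∧
      ∀ j ∈ t ∪ p, ∀ n, ⟪b j, a (e n)⟫_𝕜 = 0 ∧ ⟪b j, a (g (e n))⟫_𝕜 = 0 := by
  have := countable_of_orthonormal b.orthonormal
  obtain ⟨c, hc, rfl⟩ := exists_injective_range_eq hq
  obtain ⟨d, hd, hdr⟩ := exists_injective_range_eq (s := t \ s ∪ p) (hp.mono subset_union_right)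
  have hcst n : c n ∉ s ∪ t := disjoint_left.1 hqst (mem_range_self n)
  have hds n : d n ∉ s := by
    obtain h | h := hdr.subset (mem_range_self n)
    exacts [h.2, disjoint_left.1 hps h]
  have hdc m n : d m ≠ c n := by
    obtain h | h := hdr.subset (mem_range_self m)
    exacts [ne_of_mem_of_not_mem h.1 fun h => hcst n (.inr h),
      (hpq.ne_of_mem h (mem_range_self n))]
  obtain ⟨x, hx, hxs, hgx⟩ := exists_orthonormal_seq_inner_apply_eq_zero
    (A := (Submodule.span 𝕜 (b '' s))ᗮ) (not_finiteDimensional_of_orthonormal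
      (b.orthonormal.comp d hd) fun n => mem_orthogonal_span_iff.2 <| forall_mem_image.2 fun j hj =>
        b.orthonormal.2 (ne_of_mem_of_not_mem hj (hds n))) g
  have hbx : ∀ j ∈ s, ∀ n, ⟪b j, x n⟫_𝕜 = 0 := fun j hj n =>
    mem_orthogonal_span_iff.1 (hxs n) _ (mem_image_of_mem b hj)
  have hodd_even m n : 2 * m + 1 ≠ 2 * n := by omega
  obtain ⟨a, ha, hax⟩ := exists_mem_fixator_image_apply_eq b.orthonormal (s := s)
    (v := fun n => x (2 * n + 1)) (w := b ∘ d) (r := fun n => x (2 * n)) (r' := b ∘ c)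
    (orthonormal_sumElim (hx.comp _ fun _ _ _ => by omega) (hx.comp _ fun _ _ _ => by omega)
      fun m n => hx.2 (hodd_even m n))
    (orthonormal_sumElim (b.orthonormal.comp d hd) (b.orthonormal.comp c hc)
      fun m n => b.orthonormal.2 (hdc m n))
    (fun j hj => Sum.rec (fun _ => hbx j hj _) fun _ => hbx j hj _)
    (fun j hj => Sum.rec (fun n => b.orthonormal.2 (ne_of_mem_of_not_mem hj (hds n)))
      fun n => b.orthonormal.2 (ne_of_mem_of_not_mem hj fun h => hcst n (.inl h)))
  refine ⟨a, ha, fun n => x (2 * n), hx.comp _ fun _ _ _ => by omega, fun j hj n => ?_⟩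
  by_cases hjs : j ∈ s
  · have hjt : j ∈ t := hj.resolve_right fun h => disjoint_left.1 hps h hjs
    have haj := mem_fixator_image_iff.1 ha j hjs
    have hgj := mem_fixator_image_iff.1 hg j ⟨hjs, hjt⟩
    have hxj := hbx j hjs (2 * n)
    exact ⟨by rwa [← haj, a.inner_map_map], by rwa [← haj, a.inner_map_map, ← hgj, g.inner_map_map]⟩
  · obtain ⟨m, rfl⟩ := hdr.superset (hj.imp_left fun h => ⟨h, hjs⟩)
    change ⟪(b ∘ d) m, _⟫_𝕜 = 0 ∧ ⟪(b ∘ d) m, _⟫_𝕜 = 0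
    rw [← hax, a.inner_map_map, a.inner_map_map]
    exact ⟨hx.2 (hodd_even m n), hgx _ _ (hodd_even m n)⟩

/-- With `a` and `e` as in the previous lemma, some `b₁` and `b₂` fixing `t` move `a ∘ g ∘ e` and
`a ∘ e`, respectively, onto the basis vectors of `s \ t`. -/
theorem exists_mul_mem_fixator_image (hst : (s ∪ t)ᶜ.Infinite) (hsdiff : (s \ t).Infinite)
    {g : H ≃ₗᵢ[𝕜] H} (hg : g ∈ fixator 𝕜 (b '' (s ∩ t))) :
    ∃ a ∈ fixator 𝕜 (b '' s), ∃ b₁ ∈ fixator 𝕜 (b '' t), ∃ b₂ ∈ fixator 𝕜 (b '' t),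
      b₁ * a * g * a⁻¹ * b₂⁻¹ ∈ fixator 𝕜 (b '' s) := by
  obtain ⟨p, q, hpq, hdisj, hp, hq⟩ := exists_disjoint_infinite_union_eq hst
  have hpst : Disjoint p (s ∪ t) := disjoint_left.2 fun j hj => hpq.subset (.inl hj)
  have hqst : Disjoint q (s ∪ t) := disjoint_left.2 fun j hj => hpq.subset (.inr hj)
  obtain ⟨hps, hpt⟩ := disjoint_union_right.1 hpst
  obtain ⟨a, ha, e, he, hbe⟩ :=
    exists_mem_fixator_image_inner_eq_zero b hp hq hdisj hps hqst hg
  have := countable_of_orthonormal b.orthonormal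
  obtain ⟨f, hf, hfr⟩ := exists_injective_range_eq hsdiff
  have hft n : f n ∉ t ∪ p := by
    have h := hfr.subset (mem_range_self n)
    exact not_or.2 ⟨h.2, fun h' => disjoint_left.1 hps h' h.1⟩
  obtain ⟨b₁, hb₁, hb₁f⟩ := exists_mem_fixator_image_apply_hilbertBasis_eq b
    ((he.comp_linearIsometryEquiv g).comp_linearIsometryEquiv a) hp hpt
    (fun j hj n => (hbe j hj n).2) hf hft
  obtain ⟨b₂, hb₂, hb₂f⟩ := exists_mem_fixator_image_apply_hilbertBasis_eq b
    (he.comp_linearIsometryEquiv a) hp hpt (fun j hj n => (hbe j hj n).1) hf hft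
  refine ⟨a, ha, b₁, hb₁, b₂, hb₂, mem_fixator_image_iff.2 fun j hj => ?_⟩
  by_cases hjt : j ∈ t
  · have hsub {u : Set J} (hu : s ∩ t ⊆ u) := fixator_anti (𝕜 := 𝕜) (image_mono (f := b) hu)
    replace ha := hsub inter_subset_left ha
    replace hb₁ := hsub inter_subset_right hb₁
    replace hb₂ := hsub inter_subset_right hb₂
    exact mem_fixator_image_iff.1 (mul_mem (mul_mem (mul_mem (mul_mem hb₁ ha) hg)
      (inv_mem ha)) (inv_mem hb₂)) j ⟨hj, hjt⟩
  · obtain ⟨n, rfl⟩ := hfr.superset ⟨hj, hjt⟩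
    change b₁ (a (g (a⁻¹ (b₂⁻¹ (b (f n)))))) = _
    have hb₂e : b₂⁻¹ (b (f n)) = a (e n) := b₂.symm_apply_eq.2 (hb₂f n).symm
    have hae : a⁻¹ (a (e n)) = e n := a.symm_apply_apply _
    rw [hb₂e, hae]
    exact hb₁f n

theorem le_of_mem_fixator_image_inter {ℓ : GroupSeminorm (H ≃ₗᵢ[𝕜] H)} {K K' : ℝ}
    (hs : ∀ g ∈ fixator 𝕜 (b '' s), ℓ g ≤ K) (ht : ∀ g ∈ fixator 𝕜 (b '' t), ℓ g ≤ K')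
    (hst : (s ∪ t)ᶜ.Infinite) (hsdiff : (s \ t).Infinite) {g : H ≃ₗᵢ[𝕜] H}
    (hg : g ∈ fixator 𝕜 (b '' (s ∩ t))) : ℓ g ≤ 3 * K + 2 * K' := by
  obtain ⟨a, ha, b₁, hb₁, b₂, hb₂, hh⟩ := exists_mul_mem_fixator_image b hst hsdiff hg
  calc ℓ g = ℓ (a⁻¹ * b₁⁻¹ * (b₁ * a * g * a⁻¹ * b₂⁻¹) * b₂ * a) := by group
    _ ≤ ℓ a⁻¹ + ℓ b₁⁻¹ + ℓ (b₁ * a * g * a⁻¹ * b₂⁻¹) + ℓ b₂ + ℓ a := by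
      grw [map_mul_le_add, map_mul_le_add, map_mul_le_add, map_mul_le_add]
    _ ≤ K + K' + K + K' + K := by
      grw [map_inv_eq_map, map_inv_eq_map, hs a ha, hs _ hh, ht b₁ hb₁, ht b₂ hb₂]
    _ = 3 * K + 2 * K' := by ring

theorem IsSeparableGroupSeminorm.exists_hilbertBasis_fixator_lt {ℓ : GroupSeminorm (H ≃ₗᵢ[𝕜] H)}
    (hℓ : IsSeparableGroupSeminorm ℓ) (hinf : ¬ FiniteDimensional 𝕜 H) [Countable J] {s : Set J}
    (hs : s.Infinite) (hs' : sᶜ.Infinite) {δ : ℝ} (hδ : 0 < δ) :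
    ∃ b : HilbertBasis J 𝕜 H, ∀ g ∈ fixator 𝕜 (b '' s), ℓ g < δ := by
  obtain ⟨b₀⟩ := nonempty_hilbertBasis_of_countable_of_infinite ℕ hinf
  obtain ⟨s₀, hs₀, hs₀', hs₀lt⟩ := hℓ.exists_fixator_image_lt b₀ hδ
  obtain ⟨e, he⟩ := exists_equiv_mem_iff_mem hs hs' hs₀ hs₀'
  obtain ⟨b, hb⟩ := exists_hilbertBasis_reindex b₀ e
  exact ⟨b, fun g hg => hs₀lt g (mem_fixator_image_iff.2 (e.surjective.forall.2 fun j hj =>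
    hb j ▸ mem_fixator_image_iff.1 hg j ((he j).1 hj)))⟩

theorem IsSeparableGroupSeminorm.exists_finite_fixator_lt {ℓ : GroupSeminorm (H ≃ₗᵢ[𝕜] H)}
    (hℓ : IsSeparableGroupSeminorm ℓ) (hinf : ¬ FiniteDimensional 𝕜 H) {δ : ℝ}
    (hδ : 0 < δ) : ∃ s : Set H, s.Finite ∧ ∀ g ∈ fixator 𝕜 s, ℓ g < δ := by
  have hδ' : 0 < δ / 9 := by positivity
  let s : Set (ℕ × ℤ) := {x | x.2 = 0}
  have hslice n {u : Set ℤ} (hu : u.Infinite) : (Prod.mk n '' u : Set (ℕ × ℤ)).Infinite :=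
    hu.image (Prod.mk_right_injective n).injOn
  have hsinf : s.Infinite := (infinite_range_of_injective (Prod.mk_left_injective (0 : ℤ))).mono
    (range_subset_iff.2 fun _ => rfl)
  have hscompl : sᶜ.Infinite := (hslice 0 (finite_singleton 0).infinite_compl).mono
    (image_subset_iff.2 fun _ => id)
  obtain ⟨b, hs⟩ := hℓ.exists_hilbertBasis_fixator_lt hinf hsinf hscompl hδ'
  obtain ⟨φ, hφ⟩ := exists_unitary_hilbertBasis_apply b
  obtain ⟨d, hd, hlt⟩ := hℓ.exists_eventually_ne_zero_lt (φ.comp (fiberShift ℕ)) hδ'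
  set h := φ (fiberShift ℕ (.ofAdd d))
  replace hlt : ℓ h < δ / 9 := hlt
  let t : Set (ℕ × ℤ) := {x | x.2 = d x.1}
  have hsub : h '' (b '' s) ⊆ b '' t := by
    rintro - ⟨-, ⟨⟨n, -⟩, rfl, rfl⟩, rfl⟩
    rw [hφ, fiberShift_ofAdd_apply]
    exact mem_image_of_mem b (zero_add (d n))
  have ht : ∀ g ∈ fixator 𝕜 (b '' t), ℓ g ≤ δ / 9 + 2 * ℓ h := fun g hg =>
    le_of_mem_fixator_image (fun g hg => (hs g hg).le) h (fixator_anti hsub hg)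
  have hst : (s ∪ t)ᶜ.Infinite :=
    (hslice 0 (finite_singleton 0 |>.union (finite_singleton (d 0))).infinite_compl).mono
      (image_subset_iff.2 fun _ => id)
  rw [← Nat.cofinite_eq_atTop] at hd
  have hsdiff : (s \ t).Infinite :=
    ((frequently_cofinite_iff_infinite.1 hd.frequently).image
      (Prod.mk_left_injective (0 : ℤ)).injOn).mono
      (image_subset_iff.2 fun _ hn => ⟨rfl, hn.symm⟩)
  have hfin : (s ∩ t).Finite := by
    refine ((eventually_cofinite.1 hd).image fun n => (n, (0 : ℤ))).subset ?_
    rintro ⟨n, -⟩ ⟨rfl, hn⟩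
    exact ⟨n, not_not.2 hn.symm, rfl⟩
  refine ⟨b '' (s ∩ t), hfin.image b, fun g hg => ?_⟩
  linarith [le_of_mem_fixator_image_inter b (fun g hg => (hs g hg).le) ht hst hsdiff hg]

end Generation

/-! ### Double cosets of the fixator of a finite-dimensional subspace -/

section Dilation

variable {𝕜 H E : Type*} [RCLike 𝕜] [NormedAddCommGroup H] [InnerProductSpace 𝕜 H]
  [NormedAddCommGroup E] [InnerProductSpace 𝕜 E] [FiniteDimensional 𝕜 E]

theorem exists_orthonormal_nat_mem {A : Submodule 𝕜 H} (hA : ¬ FiniteDimensional 𝕜 A) :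
    ∃ x : ℕ → H, Orthonormal 𝕜 x ∧ ∀ n, x n ∈ A :=
  let ⟨x, hx, hxA, _⟩ := exists_orthonormal_seq_inner_apply_eq_zero hA 1
  ⟨x, hx, hxA⟩

theorem exists_linearIsometry_mem_orthogonal (E : Type*) [NormedAddCommGroup E]
    [InnerProductSpace 𝕜 E] [FiniteDimensional 𝕜 E] (hinf : ¬ FiniteDimensional 𝕜 H)
    (L : Submodule 𝕜 H) [FiniteDimensional 𝕜 L] : ∃ q : E →ₗᵢ[𝕜] H, ∀ x, q x ∈ Lᗮ := by
  obtain ⟨e, he, heL⟩ := exists_orthonormal_nat_mem (not_finiteDimensional_orthogonal hinf L)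
  let o := stdOrthonormalBasis 𝕜 E
  let f : E →ₗ[𝕜] Lᗮ := o.toBasis.constr 𝕜 fun i => ⟨e i, heL i⟩
  have hf : Orthonormal 𝕜 (f ∘ o.toBasis) := by
    convert (he.codRestrict Lᗮ heL).comp _ (Fin.val_injective (n := finrank 𝕜 E)) using 1
    ext i
    simp [f]
  exact ⟨Lᗮ.subtypeₗᵢ.comp (f.isometryOfOrthonormal (by simp [o.orthonormal]) hf),
    fun x => (f x).2⟩

theorem exists_orthonormal_sumElim_nat {ι : Type*} [Finite ι] {v : ι → H} (hv : Orthonormal 𝕜 v)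
    (hinf : ¬ FiniteDimensional 𝕜 H) : ∃ r : ℕ → H, Orthonormal 𝕜 (Sum.elim v r) := by
  have := FiniteDimensional.span_of_finite 𝕜 (finite_range v)
  obtain ⟨r, hr, hrv⟩ := exists_orthonormal_nat_mem
    (not_finiteDimensional_orthogonal hinf (Submodule.span 𝕜 (range v)))
  exact ⟨r, orthonormal_sumElim hv hr fun i n => mem_orthogonal_span_range_iff.1 (hrv n) i⟩

variable [CompleteSpace H]

theorem exists_linearMap_norm_sq_eq_sub (S : E →ₗ[𝕜] H) (hS : ∀ x, ‖S x‖ ≤ ‖x‖) :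
    ∃ (m : ℕ) (R : E →ₗ[𝕜] EuclideanSpace 𝕜 (Fin m)), ∀ x, ‖R x‖ ^ 2 = ‖x‖ ^ 2 - ‖S x‖ ^ 2 := by
  have := FiniteDimensional.complete 𝕜 E
  let S' : E →L[𝕜] H := S.toContinuousLinearMap
  let D : E →L[𝕜] E := 1 - S'.adjoint ∘L S'
  have hD x : RCLike.re ⟪D x, x⟫_𝕜 = ‖x‖ ^ 2 - ‖S x‖ ^ 2 := by
    change RCLike.re ⟪x - S'.adjoint (S' x), x⟫_𝕜 = _
    rw [inner_sub_left, map_sub, S'.adjoint_inner_left, inner_self_eq_norm_sq,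
      inner_self_eq_norm_sq]
    rfl
  have hDpos : D.IsPositive := by
    refine ContinuousLinearMap.isPositive_def'.2
      ⟨.sub (.one _) S'.isPositive_adjoint_comp_self.isSelfAdjoint, fun x => ?_⟩
    rw [ContinuousLinearMap.reApplyInnerSelf_apply, hD, sub_nonneg]
    gcongr
    exact hS x
  obtain ⟨m, u, hu⟩ := ContinuousLinearMap.isPositive_iff_eq_sum_rankOne.1 hDpos
  refine ⟨m, (WithLp.linearEquiv 2 𝕜 (Fin m → 𝕜)).symm.toLinearMap ∘ₗ
    LinearMap.pi fun i => innerₛₗ 𝕜 (u i), fun x => ?_⟩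
  rw [← hD, EuclideanSpace.norm_sq_eq, hu]
  simp only [sum_apply, InnerProductSpace.rankOne_apply, sum_inner, map_sum,
    inner_smul_left, RCLike.conj_mul, ← RCLike.ofReal_pow, RCLike.ofReal_re]
  rfl

/-- The isometry is `S + q ∘ R`, where `‖R x‖ ^ 2 = ‖x‖ ^ 2 - ‖S x‖ ^ 2` and the range of `q` is
orthogonal to `L` and to the range of `S`. -/
theorem exists_linearIsometry_inner_eq (hinf : ¬ FiniteDimensional 𝕜 H) (S : E →ₗ[𝕜] H)
    (hS : ∀ x, ‖S x‖ ≤ ‖x‖) (L : Submodule 𝕜 H) [FiniteDimensional 𝕜 L] :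
    ∃ X : E →ₗᵢ[𝕜] H, ∀ y ∈ L, ∀ x, ⟪y, X x⟫_𝕜 = ⟪y, S x⟫_𝕜 := by
  obtain ⟨m, R, hR⟩ := exists_linearMap_norm_sq_eq_sub S hS
  obtain ⟨q, hq⟩ := exists_linearIsometry_mem_orthogonal (EuclideanSpace 𝕜 (Fin m)) hinf
    (L ⊔ LinearMap.range S)
  refine ⟨⟨S + q.toLinearMap ∘ₗ R, fun x => ?_⟩, fun y hy x => ?_⟩
  · have horth : ⟪S x, q (R x)⟫_𝕜 = 0 := hq _ _ (Submodule.mem_sup_right ⟨x, rfl⟩)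
    refine (sq_eq_sq₀ (norm_nonneg _) (norm_nonneg _)).1 ?_
    calc ‖S x + q (R x)‖ ^ 2 = ‖S x‖ ^ 2 + ‖q (R x)‖ ^ 2 := by
          simpa only [sq] using norm_add_sq_eq_norm_sq_add_norm_sq_of_inner_eq_zero _ _ horth
      _ = ‖x‖ ^ 2 := by rw [q.norm_map, hR]; ring
  · have horth : ⟪y, q (R x)⟫_𝕜 = 0 := hq _ _ (Submodule.mem_sup_left hy)
    exact (inner_add_right _ _ _).trans (add_eq_left.2 horth)

variable [SeparableSpace H]

theorem exists_unitary_apply_eq_of_norm_eq {V : Type*} [AddCommGroup V] [Module 𝕜 V]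
    [FiniteDimensional 𝕜 V]
    (hinf : ¬ FiniteDimensional 𝕜 H) (S T : V →ₗ[𝕜] H) (h : ∀ z, ‖T z‖ = ‖S z‖) :
    ∃ u : H ≃ₗᵢ[𝕜] H, ∀ z, u (S z) = T z := by
  obtain ⟨σ, hσ⟩ := S.rangeRestrict.exists_rightInverse_of_surjective S.range_rangeRestrict
  have hSσ (y : LinearMap.range S) : S (σ y) = y := congrArg Subtype.val (LinearMap.congr_fun hσ y)
  let φ : LinearMap.range S →ₗᵢ[𝕜] H :=
    ⟨T ∘ₗ σ, fun y => by rw [LinearMap.comp_apply, h, hSσ, Submodule.coe_norm]⟩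
  have hφ z : φ (S.rangeRestrict z) = T z := by
    have hz : T (σ (S.rangeRestrict z) - z) = 0 := by
      rw [← norm_eq_zero, h, map_sub, hSσ]
      simp
    rwa [map_sub, sub_eq_zero] at hz
  let b := stdOrthonormalBasis 𝕜 (LinearMap.range S)
  have hv := b.orthonormal.comp_linearIsometry (Submodule.subtypeₗᵢ _)
  have hw := b.orthonormal.comp_linearIsometry φ
  obtain ⟨r, hr⟩ := exists_orthonormal_sumElim_nat hv hinf
  obtain ⟨r', hr'⟩ := exists_orthonormal_sumElim_nat hw hinf
  obtain ⟨u, hu⟩ := exists_linearIsometryEquiv_apply_eq hr hr'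
  have key : u.toLinearEquiv.toLinearMap ∘ₗ (LinearMap.range S).subtype = φ.toLinearMap :=
    b.toBasis.ext fun i => by simpa using hu i
  exact ⟨u, fun z => (LinearMap.congr_fun key (S.rangeRestrict z)).trans (hφ z)⟩

end Dilation

section DoubleCoset

variable {𝕜 H : Type*} [RCLike 𝕜] [NormedAddCommGroup H] [InnerProductSpace 𝕜 H]
  {F : Submodule 𝕜 H} {w : H ≃ₗᵢ[𝕜] H} {c s : ℝ}

theorem inner_smul_add_smul_eq {q : F →ₗᵢ[𝕜] H} (hq : ∀ x, q x ∈ Fᗮ) (a b a' b' : ℝ) (x y : F) :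
    ⟪(a : 𝕜) • (x : H) + (b : 𝕜) • q x, (a' : 𝕜) • (y : H) + (b' : 𝕜) • q y⟫_𝕜 =
      (a * a' + b * b' : ℝ) * ⟪x, y⟫_𝕜 := by
  have hxy : ⟪(x : H), q y⟫_𝕜 = 0 := hq y x x.2
  have hyx : ⟪q x, (y : H)⟫_𝕜 = 0 := inner_eq_zero_symm.1 (hq x y y.2)
  simp only [inner_add_left, inner_add_right, inner_smul_left, inner_smul_right, hxy, hyx,
    q.inner_map_map, Submodule.coe_inner, RCLike.conj_ofReal]
  push_cast
  ring

theorem inner_unitary_apply_left_eq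
    (hw : ∀ x y : F, ⟪(x : H), w y⟫_𝕜 = c * ⟪x, y⟫_𝕜) (x y : F) :
    ⟪w x, (y : H)⟫_𝕜 = c * ⟪x, y⟫_𝕜 := by
  rw [← inner_conj_symm, hw, map_mul, RCLike.conj_ofReal, inner_conj_symm]

theorem norm_inner_unitary_apply_sub_le {g : H ≃ₗᵢ[𝕜] H} {η : ℝ} {x : H}
    (hg : ‖g x - x‖ ≤ η * ‖x‖) (y : H) : ‖⟪x, g y - y⟫_𝕜‖ ≤ η * ‖x‖ * ‖y‖ := by
  have hinner : ⟪x, g y - y⟫_𝕜 = ⟪g⁻¹ x - x, y⟫_𝕜 := by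
    rw [inner_sub_left, inner_sub_right, ← g.inner_map_map (g⁻¹ x)]
    simp
  have hnorm : ‖g⁻¹ x - x‖ = ‖g x - x‖ := by
    rw [← g.norm_map, map_sub, norm_sub_rev]
    simp
  grw [hinner, norm_inner_le_norm, hnorm, hg]

variable [FiniteDimensional 𝕜 F]

theorem exists_linearMap_mul_inner_eq (T : F →ₗ[𝕜] H) {η : ℝ} (hη : 0 < η)
    (hT : ∀ x y : F, ‖⟪(x : H), T y⟫_𝕜‖ ≤ η * ‖x‖ * ‖y‖) :
    ∃ N : F →ₗ[𝕜] F, (∀ y, ‖N y‖ ≤ ‖y‖) ∧ ∀ x y, η * ⟪x, N y⟫_𝕜 = ⟪(x : H), T y⟫_𝕜 := by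
  have hη' : (η : 𝕜) ≠ 0 := RCLike.ofReal_ne_zero.2 hη.ne'
  let N : F →ₗ[𝕜] F := (η : 𝕜)⁻¹ • F.orthogonalProjectionOnto.toLinearMap ∘ₗ T
  have hN x y : η * ⟪x, N y⟫_𝕜 = ⟪(x : H), T y⟫_𝕜 := by
    change η * ⟪x, (η : 𝕜)⁻¹ • F.orthogonalProjectionOnto (T y)⟫_𝕜 = _
    rw [inner_smul_right, mul_inv_cancel_left₀ hη']
    exact Submodule.inner_orthogonalProjectionOnto_eq_of_mem_left x _
  refine ⟨N, fun y => ?_, hN⟩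
  have hle : η * (‖N y‖ * ‖N y‖) ≤ η * ‖N y‖ * ‖y‖ :=
    calc η * (‖N y‖ * ‖N y‖) = ‖η * ⟪N y, N y⟫_𝕜‖ := by
          rw [norm_mul, RCLike.norm_of_nonneg hη.le, ← inner_self_eq_norm_mul_norm (𝕜 := 𝕜),
            ← inner_self_re_eq_norm]
      _ ≤ η * ‖N y‖ * ‖y‖ := hN (N y) y ▸ hT (N y) y
  rcases (norm_nonneg (N y)).eq_or_lt with h | h
  · exact h ▸ norm_nonneg y
  · exact le_of_mul_le_mul_left (by linarith) (mul_pos hη h)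

variable [CompleteSpace H]

/-- The dilated contraction is `y ↦ c • w y + (N y - c • w (N y))`: its first summand has the
required inner products with `w x`, and its second one is orthogonal to every `w x`. -/
theorem exists_linearIsometry_inner_eq_mul (hinf : ¬ FiniteDimensional 𝕜 H)
    (hcs : c ^ 2 + s ^ 2 = 1) (hw : ∀ x y : F, ⟪(x : H), w y⟫_𝕜 = c * ⟪x, y⟫_𝕜)
    (N : F →ₗ[𝕜] F) (hN : ∀ y, ‖N y‖ ≤ ‖y‖) :
    ∃ X : F →ₗᵢ[𝕜] H, ∀ x y : F, ⟪w x, X y⟫_𝕜 = c * ⟪x, y⟫_𝕜 ∧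
      ⟪(x : H), X y⟫_𝕜 = (c ^ 2 : ℝ) * ⟪x, y⟫_𝕜 + (s ^ 2 : ℝ) * ⟪x, N y⟫_𝕜 := by
  let W : F →ₗ[𝕜] H := w.toLinearEquiv.toLinearMap ∘ₗ F.subtype
  let S : F →ₗ[𝕜] H := (c : 𝕜) • W + (F.subtype - (c : 𝕜) • W) ∘ₗ N
  have hS y : S y = (c : 𝕜) • w y + ((N y : H) - (c : 𝕜) • w (N y)) := rfl
  have hwS (x y : F) : ⟪w x, S y⟫_𝕜 = c * ⟪x, y⟫_𝕜 := by
    simp only [hS, inner_add_right, inner_sub_right, inner_smul_right,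
      inner_unitary_apply_left_eq hw, w.inner_map_map, Submodule.coe_inner]
    ring
  have hxS (x y : F) :
      ⟪(x : H), S y⟫_𝕜 = (c ^ 2 : ℝ) * ⟪x, y⟫_𝕜 + (s ^ 2 : ℝ) * ⟪x, N y⟫_𝕜 := by
    rw [← eq_sub_iff_add_eq'] at hcs
    simp only [hS, inner_add_right, inner_sub_right, inner_smul_right, hw, Submodule.coe_inner,
      hcs]
    push_cast
    ring
  have hnormS y : ‖S y‖ ^ 2 = c ^ 2 * ‖y‖ ^ 2 + s ^ 2 * ‖N y‖ ^ 2 := by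
    have hinner : ⟪S y, S y⟫_𝕜 = (c ^ 2 : ℝ) * ⟪y, y⟫_𝕜 + (s ^ 2 : ℝ) * ⟪N y, N y⟫_𝕜 := by
      nth_rewrite 1 [hS]
      simp only [inner_add_left, inner_sub_left, inner_smul_left, hwS, hxS, RCLike.conj_ofReal]
      push_cast
      ring
    simpa only [map_add, RCLike.re_ofReal_mul, inner_self_eq_norm_sq] using
      congrArg RCLike.re hinner
  have hSle y : ‖S y‖ ≤ ‖y‖ := by
    refine (sq_le_sq₀ (norm_nonneg _) (norm_nonneg _)).1 ?_
    calc ‖S y‖ ^ 2 ≤ c ^ 2 * ‖y‖ ^ 2 + s ^ 2 * ‖y‖ ^ 2 := by grw [hnormS, hN]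
      _ = ‖y‖ ^ 2 := by rw [← add_mul, hcs, one_mul]
  obtain ⟨X, hX⟩ := exists_linearIsometry_inner_eq hinf S hSle (F ⊔ LinearMap.range W)
  exact ⟨X, fun x y => ⟨(hX _ (Submodule.mem_sup_right ⟨x, rfl⟩) y).trans (hwS x y),
    (hX _ (Submodule.mem_sup_left x.2) y).trans (hxS x y)⟩⟩

variable [SeparableSpace H]

theorem exists_unitary_apply_eq_cos_smul_add_sin_smul (hinf : ¬ FiniteDimensional 𝕜 H)
    {q : F →ₗᵢ[𝕜] H} (hq : ∀ x, q x ∈ Fᗮ) (θ : ℝ) : ∃ u : H ≃ₗᵢ[𝕜] H, ∀ x : F,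
      u x = (Real.cos θ : 𝕜) • (x : H) + (Real.sin θ : 𝕜) • q x := by
  refine exists_unitary_apply_eq_of_norm_eq hinf F.subtype
    ((Real.cos θ : 𝕜) • F.subtype + (Real.sin θ : 𝕜) • q.toLinearMap) fun x => ?_
  have hnorm := congrArg RCLike.re
    (inner_smul_add_smul_eq hq (Real.cos θ) (Real.sin θ) (Real.cos θ) (Real.sin θ) x x)
  rw [← sq, ← sq, Real.cos_sq_add_sin_sq, RCLike.ofReal_one, one_mul, inner_self_eq_norm_sq,
    inner_self_eq_norm_sq] at hnorm
  exact (sq_eq_sq₀ (norm_nonneg _) (norm_nonneg _)).1 hnorm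

theorem exists_mem_fixator_apply_eq_of_inner_eq (hinf : ¬ FiniteDimensional 𝕜 H)
    (f k : F →ₗᵢ[𝕜] H) (h : ∀ x y : F, ⟪(x : H), f y⟫_𝕜 = ⟪(x : H), k y⟫_𝕜) :
    ∃ a ∈ fixator 𝕜 (F : Set H), ∀ y, a (f y) = k y := by
  obtain ⟨a, ha⟩ := exists_unitary_apply_eq_of_norm_eq hinf (F.subtype.coprod f.toLinearMap)
    (F.subtype.coprod k.toLinearMap) fun z => by
      refine (sq_eq_sq₀ (norm_nonneg _) (norm_nonneg _)).1 ?_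
      change ‖(z.1 : H) + k z.2‖ ^ 2 = ‖(z.1 : H) + f z.2‖ ^ 2
      rw [norm_add_sq (𝕜 := 𝕜), norm_add_sq (𝕜 := 𝕜), h, f.norm_map, k.norm_map]
  exact ⟨a, mem_fixator_iff.2 fun x hx => by simpa using ha (⟨x, hx⟩, 0),
    fun y => by simpa using ha (0, y)⟩

theorem exists_unitary_inner_eq (hinf : ¬ FiniteDimensional 𝕜 H) (S : F →ₗ[𝕜] H)
    (hS : ∀ x, ‖S x‖ ≤ ‖x‖) : ∃ v : H ≃ₗᵢ[𝕜] H, ∀ x y : F, ⟪(x : H), v y⟫_𝕜 = ⟪(x : H), S y⟫_𝕜 := by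
  obtain ⟨X, hX⟩ := exists_linearIsometry_inner_eq hinf S hS F
  obtain ⟨v, hv⟩ := exists_unitary_apply_eq_of_norm_eq hinf F.subtype X.toLinearMap X.norm_map
  exact ⟨v, fun x y => by rw [← hX x x.2]; exact congrArg _ (hv y)⟩

variable {ℓ : GroupSeminorm (H ≃ₗᵢ[𝕜] H)} {k : H ≃ₗᵢ[𝕜] H} {K δ : ℝ}

theorem IsSeparableGroupSeminorm.exists_rotation (hℓ : IsSeparableGroupSeminorm ℓ)
    (hinf : ¬ FiniteDimensional 𝕜 H) (F : Submodule 𝕜 H) [FiniteDimensional 𝕜 F] (hδ : 0 < δ) :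
    ∃ (w : H ≃ₗᵢ[𝕜] H) (c s : ℝ), ℓ w < δ ∧ c ^ 2 + s ^ 2 = 1 ∧ s ≠ 0 ∧
      ∀ x y : F, ⟪(x : H), w y⟫_𝕜 = c * ⟪x, y⟫_𝕜 := by
  obtain ⟨q, hq⟩ := exists_linearIsometry_mem_orthogonal F hinf F
  choose u hu using exists_unitary_apply_eq_cos_smul_add_sin_smul hinf hq
  have : Uncountable (Icc (0 : ℝ) 1) := by
    rw [← not_countable_iff, countable_coe_iff, Cardinal.Real.Icc_countable_iff]
    norm_num
  obtain ⟨θ, φ, hne, hlt⟩ := hℓ.exists_ne_inv_mul_lt (fun θ : Icc (0 : ℝ) 1 => u θ) hδ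
  refine ⟨_, Real.cos (θ - φ), Real.sin (θ - φ), hlt, Real.cos_sq_add_sin_sq _, ?_, fun x y => ?_⟩
  · have hsub : (θ : ℝ) - φ ≠ 0 := sub_ne_zero.2 fun h => hne (Subtype.ext h)
    obtain ⟨⟨hθ₀, hθ₁⟩, hφ₀, hφ₁⟩ := And.intro θ.2 φ.2
    have hpi := Real.pi_gt_three
    rwa [Ne, Real.sin_eq_zero_iff_of_lt_of_lt (by linarith) (by linarith)]
  · have hinner : ⟪(x : H), ((u θ)⁻¹ * u φ) y⟫_𝕜 = ⟪u θ x, u φ y⟫_𝕜 := by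
      rw [← (u θ).inner_map_map]
      simp
    rw [hinner, hu, hu, inner_smul_add_smul_eq hq, Real.cos_sub]

theorem le_of_inner_eq_inner (hinf : ¬ FiniteDimensional 𝕜 H)
    (hK : ∀ g ∈ fixator 𝕜 (F : Set H), ℓ g ≤ K)
    (h : ∀ x y : F, ⟪(x : H), w y⟫_𝕜 = ⟪(x : H), k y⟫_𝕜) : ℓ k ≤ 2 * K + ℓ w := by
  obtain ⟨a, ha, hak⟩ := exists_mem_fixator_apply_eq_of_inner_eq hinf
    (w.toLinearIsometry.comp F.subtypeₗᵢ) (k.toLinearIsometry.comp F.subtypeₗᵢ) h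
  have hmem : w⁻¹ * a⁻¹ * k ∈ fixator 𝕜 (F : Set H) := mem_fixator_iff.2 fun x hx => by
    have hx : a (w x) = k x := hak ⟨x, hx⟩
    simp [← hx]
  calc ℓ k = ℓ (a * w * (w⁻¹ * a⁻¹ * k)) := by group
    _ ≤ ℓ a + ℓ w + ℓ (w⁻¹ * a⁻¹ * k) := by grw [map_mul_le_add, map_mul_le_add]
    _ ≤ 2 * K + ℓ w := by linarith [hK a ha, hK _ hmem]

/-- The factors `a * w` and `(a * w)⁻¹ * k` of `k` both have compression `c` to `F`. -/
theorem le_of_norm_inner_sub_le (hinf : ¬ FiniteDimensional 𝕜 H)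
    (hK : ∀ g ∈ fixator 𝕜 (F : Set H), ℓ g ≤ K) (hcs : c ^ 2 + s ^ 2 = 1) (hs : s ≠ 0)
    (hw : ∀ x y : F, ⟪(x : H), w y⟫_𝕜 = c * ⟪x, y⟫_𝕜)
    (hk : ∀ x y : F, ‖⟪(x : H), k y - ((c ^ 2 : ℝ) : 𝕜) • (y : H)⟫_𝕜‖ ≤ s ^ 2 * ‖x‖ * ‖y‖) :
    ℓ k ≤ 2 * (2 * K + ℓ w) := by
  obtain ⟨N, hN, hNk⟩ := exists_linearMap_mul_inner_eq
    (k.toLinearEquiv.toLinearMap ∘ₗ F.subtype - ((c ^ 2 : ℝ) : 𝕜) • F.subtype) (by positivity) hk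
  obtain ⟨X, hX⟩ := exists_linearIsometry_inner_eq_mul hinf hcs hw N hN
  have hXk (x y : F) : ⟪(x : H), X y⟫_𝕜 = ⟪(x : H), k y⟫_𝕜 := by
    rw [(hX x y).2, hNk]
    change _ + ⟪(x : H), k y - ((c ^ 2 : ℝ) : 𝕜) • (y : H)⟫_𝕜 = _
    rw [inner_sub_right, inner_smul_right, Submodule.coe_inner, add_sub_cancel]
  obtain ⟨a, ha, hak⟩ := exists_mem_fixator_apply_eq_of_inner_eq hinf X
    (k.toLinearIsometry.comp F.subtypeₗᵢ) hXk
  have hle₁ : ℓ (a * w) ≤ 2 * K + ℓ w := le_of_inner_eq_inner hinf hK fun x y => by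
    conv_rhs => rw [← mem_fixator_iff.1 ha x x.2]
    exact (a.inner_map_map _ _).symm
  have hle₂ : ℓ ((a * w)⁻¹ * k) ≤ 2 * K + ℓ w := le_of_inner_eq_inner hinf hK fun x y => by
    have hwk : w (((a * w)⁻¹ * k) y) = X y := by
      rw [← a.injective.eq_iff, hak]
      simp
    rw [hw, ← (hX x y).1, ← hwk, w.inner_map_map]
  calc ℓ k = ℓ (a * w * ((a * w)⁻¹ * k)) := by rw [mul_inv_cancel_left]
    _ ≤ ℓ (a * w) + ℓ ((a * w)⁻¹ * k) := map_mul_le_add _ _ _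
    _ ≤ 2 * (2 * K + ℓ w) := by linarith

theorem IsSeparableGroupSeminorm.exists_le_of_norm_sub_le (hℓ : IsSeparableGroupSeminorm ℓ)
    (hinf : ¬ FiniteDimensional 𝕜 H) (hK : ∀ g ∈ fixator 𝕜 (F : Set H), ℓ g ≤ K) (hδ : 0 < δ) :
    ∃ η > 0, ∀ g : H ≃ₗᵢ[𝕜] H, (∀ x ∈ F, ‖g x - x‖ ≤ η * ‖x‖) → ℓ g ≤ 8 * K + 4 * δ := by
  obtain ⟨w, c, s, hwδ, hcs, hs, hw⟩ := hℓ.exists_rotation hinf F hδ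
  have hc : ∀ y : F, ‖((c ^ 2 : ℝ) : 𝕜) • (y : H)‖ ≤ ‖y‖ := fun y => by
    rw [norm_smul, RCLike.norm_of_nonneg (sq_nonneg c), Submodule.coe_norm]
    exact mul_le_of_le_one_left (norm_nonneg _) (by linarith [sq_nonneg s])
  obtain ⟨v, hv⟩ := exists_unitary_inner_eq hinf (((c ^ 2 : ℝ) : 𝕜) • F.subtype) hc
  have hv' (x y : F) : ⟪(x : H), v y - ((c ^ 2 : ℝ) : 𝕜) • (y : H)⟫_𝕜 = 0 := by
    rw [inner_sub_right, hv, sub_eq_zero]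
    rfl
  have hℓv : ℓ v ≤ 2 * (2 * K + ℓ w) := le_of_norm_inner_sub_le hinf hK hcs hs hw fun x y => by
    rw [hv', norm_zero]
    positivity
  refine ⟨s ^ 2, by positivity, fun g hg => ?_⟩
  have hℓgv : ℓ (g * v) ≤ 2 * (2 * K + ℓ w) :=
    le_of_norm_inner_sub_le hinf hK hcs hs hw fun x y => by
      have hadd : ⟪(x : H), (g * v) y - ((c ^ 2 : ℝ) : 𝕜) • (y : H)⟫_𝕜 =
          ⟪(x : H), g (v y) - v y⟫_𝕜 := by
        rw [← sub_add_sub_cancel _ (v y : H), inner_add_right, hv', add_zero]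
        rfl
      rw [hadd]
      simpa using norm_inner_unitary_apply_sub_le (hg x x.2) (v y)
  calc ℓ g = ℓ (g * v * v⁻¹) := by rw [mul_inv_cancel_right]
    _ ≤ ℓ (g * v) + ℓ v := by grw [map_mul_le_add, map_inv_eq_map]
    _ ≤ 8 * K + 4 * δ := by linarith

end DoubleCoset

/-! ### Continuity -/

section Continuity

variable {𝕜 H : Type*} [RCLike 𝕜] [NormedAddCommGroup H] [InnerProductSpace 𝕜 H]

theorem exists_finite_norm_sub_le (F : Submodule 𝕜 H) [FiniteDimensional 𝕜 F] {η : ℝ}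
    (hη : 0 < η) : ∃ t : Set H, t.Finite ∧ ∃ r > 0, ∀ g : H ≃ₗᵢ[𝕜] H,
      (∀ v ∈ t, ‖g v - v‖ < r) → ∀ x ∈ F, ‖g x - x‖ ≤ η * ‖x‖ := by
  let o := stdOrthonormalBasis 𝕜 F
  let m := finrank 𝕜 F
  refine ⟨range fun i => (o i : H), finite_range _, η / (m + 1), by positivity,
    fun g hg x hx => ?_⟩
  let D : F →ₗ[𝕜] H := (g.toLinearEquiv.toLinearMap - LinearMap.id) ∘ₗ F.subtype
  have hD : g x - x = ∑ i, ⟪o i, (⟨x, hx⟩ : F)⟫_𝕜 • (g (o i) - o i) :=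
    calc g x - x = D (∑ i, ⟪o i, (⟨x, hx⟩ : F)⟫_𝕜 • o i) := by rw [o.sum_repr']; rfl
      _ = _ := by rw [map_sum]; exact Finset.sum_congr rfl fun i _ => map_smul D _ _
  calc ‖g x - x‖ ≤ ∑ i, ‖⟪o i, (⟨x, hx⟩ : F)⟫_𝕜 • (g (o i) - (o i : H))‖ := hD ▸ norm_sum_le _ _
    _ ≤ ∑ i : Fin m, ‖x‖ * (η / (m + 1)) := Finset.sum_le_sum fun i _ => by
        rw [norm_smul]
        gcongr
        · simpa using norm_inner_le_norm (𝕜 := 𝕜) (o i) (⟨x, hx⟩ : F)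
        · exact (hg _ ⟨i, rfl⟩).le
    _ = (m / (m + 1)) * (η * ‖x‖) := by
        rw [Finset.sum_const, Finset.card_univ, Fintype.card_fin, nsmul_eq_mul]
        ring
    _ ≤ η * ‖x‖ := mul_le_of_le_one_left (by positivity)
        ((div_le_one (by positivity)).2 (by linarith))

theorem IsSeparableGroupSeminorm.exists_finite_lt [CompleteSpace H] [SeparableSpace H]
    {ℓ : GroupSeminorm (H ≃ₗᵢ[𝕜] H)} (hℓ : IsSeparableGroupSeminorm ℓ)
    (hinf : ¬ FiniteDimensional 𝕜 H) {ε : ℝ} (hε : 0 < ε) : ∃ t : Set H, t.Finite ∧ ∃ r > 0,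
      ∀ g : H ≃ₗᵢ[𝕜] H, (∀ v ∈ t, ‖g v - v‖ < r) → ℓ g < ε := by
  have hδ : 0 < ε / 13 := by positivity
  obtain ⟨s, hs, hsδ⟩ := hℓ.exists_finite_fixator_lt hinf hδ
  have : FiniteDimensional 𝕜 (Submodule.span 𝕜 s) := FiniteDimensional.span_of_finite 𝕜 hs
  obtain ⟨η, hη, hηε⟩ := hℓ.exists_le_of_norm_sub_le hinf
    (fun g hg => (hsδ g (fixator_anti Submodule.subset_span hg)).le) hδ
  obtain ⟨t, ht, r, hr, htr⟩ := exists_finite_norm_sub_le (Submodule.span 𝕜 s) hη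
  exact ⟨t, ht, r, hr, fun g hg => (hηε g (htr g hg)).trans_lt (by linarith)⟩

theorem continuous_apply_strongOperatorTopology (v : H) :
    @Continuous _ _ (strongOperatorTopology 𝕜 H) _ fun u : H ≃ₗᵢ[𝕜] H => u v :=
  letI := strongOperatorTopology 𝕜 H
  (continuous_apply v).comp continuous_induced_dom

theorem unitaryGroup_isometric_action_continuous_general [CompleteSpace H] [SeparableSpace H]
    (hinf : ¬ FiniteDimensional 𝕜 H) {X : Type*} [PseudoMetricSpace X] [SeparableSpace X]
    (a : (H ≃ₗᵢ[𝕜] H) →* (X ≃ᵢ X)) :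
    @Continuous ((H ≃ₗᵢ[𝕜] H) × X) X
      (@instTopologicalSpaceProd _ _ (strongOperatorTopology 𝕜 H) _) _
      (fun p => a p.1 p.2) := by
  let := strongOperatorTopology 𝕜 H
  refine continuous_iff_continuousAt.2 fun ⟨g, x⟩ => Metric.tendsto_nhds.2 fun ε hε => ?_
  obtain ⟨t, ht, r, hr, htr⟩ :=
    (isSeparableGroupSeminorm_displacementSeminorm a x).exists_finite_lt hinf (half_pos hε)
  have hnear : ∀ᶠ g' in nhds g, ∀ v ∈ t, ‖g' v - g v‖ < r := (eventually_all_finite ht).2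
    fun v _ => by
      simpa only [dist_eq_norm] using Metric.tendsto_nhds.1
        (continuous_apply_strongOperatorTopology v).continuousAt r hr
  filter_upwards [hnear.prod_nhds (Metric.ball_mem_nhds x (half_pos hε))] with ⟨g', x'⟩ ⟨hg', hx'⟩
  have hdisp : displacementSeminorm a x (g⁻¹ * g') < ε / 2 := htr _ fun v hv => by
    rw [← g.norm_map, map_sub]
    simpa using hg' v hv
  calc dist (a g' x') (a g x) ≤ dist (a g' x') (a g' x) + dist (a g x) (a g' x) :=
        by rw [dist_comm (a g x)]; exact dist_triangle _ _ _
    _ = dist x' x + displacementSeminorm a x (g⁻¹ * g') := by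
        rw [(a g').dist_eq, dist_apply_apply_eq_displacementSeminorm]
    _ < ε := by linarith [Metric.mem_ball.1 hx']

end Continuity

/-- If `H` is an infinite-dimensional separable complex Hilbert space, then every action of
the unitary group `U(H)` by (surjective) isometries on a separable metric space `X`
(i.e. every group homomorphism `U(H) →* (X ≃ᵢ X)`) is continuous as a map
`U(H) × X → X`, where `U(H)` carries the strong operator topology. -/
theorem unitaryGroup_isometric_action_continuous
    {H : Type*} [NormedAddCommGroup H] [InnerProductSpace ℂ H] [CompleteSpace H]
    [TopologicalSpace.SeparableSpace H] (hinf : ¬ FiniteDimensional ℂ H)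
    {X : Type*} [MetricSpace X] [TopologicalSpace.SeparableSpace X]
    (a : (H ≃ₗᵢ[ℂ] H) →* (X ≃ᵢ X)) :
    @Continuous ((H ≃ₗᵢ[ℂ] H) × X) X
      (@instTopologicalSpaceProd _ _ (strongOperatorTopology ℂ H) _) _
      (fun p => a p.1 p.2) :=
  unitaryGroup_isometric_action_continuous_general hinf a
end

section
/- Let H be an infinite-dimensional separable complex Hilbert space and let W be a symmetric countably syndetic subset of U(H). Then there exists a balanced closed subspace K of H such that the pointwise stabilizer G_K is contained in W^24 and W^120 contains a subset of the setwise stabilizer I_K of K that is an open neighborhood of the identity in I_K (with the strong operator topology). -/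
open Pointwise Topology

/-- The pointwise stabilizer of a subspace `K` in the unitary group of `H`. -/
def pointwiseStabilizer {𝕜 H : Type*} [RCLike 𝕜] [NormedAddCommGroup H]
    [InnerProductSpace 𝕜 H] (K : Submodule 𝕜 H) : Set (H ≃ₗᵢ[𝕜] H) :=
  {u | ∀ x ∈ K, u x = x}

/-- The setwise stabilizer of a subspace `K` in the unitary group of `H`. -/
def setwiseStabilizer {𝕜 H : Type*} [RCLike 𝕜] [NormedAddCommGroup H]
    [InnerProductSpace 𝕜 H] (K : Submodule 𝕜 H) : Set (H ≃ₗᵢ[𝕜] H) :=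
  {u | K.map (u.toLinearEquiv : H →ₗ[𝕜] H) = K}

/-!
Put `V = W⁻¹ * W`. Among uncountably many unitaries two lie in the same translate of `W`, so `V`
contains some `g⁻¹ * h` with `g ≠ h` from any uncountable family.

Decompose `H` into blocks indexed by `(ℕ × ℕ) × ℤ`, all isomorphic to one space `E`. By a diagonal
argument there is `n` such that every block diagonal unitary agrees on the `n`-th summand with an
element of `V`. The uncountable family of `0`-`1` shifts of the lines `{(n, i)} × ℤ` puts into `V`
a permutation of the blocks which translates one of these lines by `±1` and fixes every block
outside the `n`-th summand. Its commutator with the half-line sequence `v, v, v, …` telescopes to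
`v` acting on a single block, whence `G_K ⊆ V ^ 4`, where `Kᗮ` is that block.

An uncountable almost disjoint family of sets of basis vectors, each equinumerous with the basis,
yields `h ∈ V` such that `h⁻¹` maps `M = K ⊓ Fᗮ` into `Kᗮ` for some finite-dimensional `F ≤ K`.
Conjugation by `h` therefore moves `G_{Mᗮ}` into `G_K`.

If `u ∈ I_K` is close to the identity on `F`, it is carried on `F` to a product in which elements
of `G_{Mᗮ}` alternate with a rotation `R` by a small angle `θ` between `F` and a copy of `F` inside
`M`: if `T` is the compression of `u` to `F`, the first two rotations take `x ∈ F` to a vector with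
`F`-component `cos θ • T x`, the third makes it `T x`, and elements of `G_{Mᗮ}` adjust the component
in `M`. The angle is taken such that `h⁻¹ * R * h ∈ V`, which is possible since the rotations form
a one-parameter group. Counting factors, `u ∈ V ^ 25`.
-/

section CountablySyndetic

variable {G : Type*} [Group G] {W : Set G}

/-- A subset `W` of a group is countably syndetic if countably many left translates of `W` cover
the group. The translates are indexed by `ℕ`, possibly with repetitions. -/
def IsCountablySyndetic (W : Set G) : Prop :=
  ∃ s : ℕ → G, ∀ g, ∃ n, g ∈ s n • W

theorem inv_mem_inv_mul_self {g : G} (hg : g ∈ W⁻¹ * W) : g⁻¹ ∈ W⁻¹ * W := by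
  rwa [← Set.mem_inv, mul_inv_rev, inv_inv]

namespace IsCountablySyndetic

theorem one_mem_inv_mul_self (hW : IsCountablySyndetic W) : 1 ∈ W⁻¹ * W := by
  obtain ⟨s, hs⟩ := hW
  obtain ⟨n, w, hw, -⟩ := hs 1
  exact ⟨w⁻¹, Set.inv_mem_inv.mpr hw, w, hw, inv_mul_cancel w⟩

theorem exists_ne_inv_mul_mem (hW : IsCountablySyndetic W) {T : Type*} [Uncountable T]
    (g : T → G) : ∃ a b, a ≠ b ∧ (g a)⁻¹ * g b ∈ W⁻¹ * W := by
  obtain ⟨s, hs⟩ := hW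
  choose N w hw hN using fun t => hs (g t)
  obtain ⟨a, b, hab, hne⟩ := Function.not_injective_iff.mp fun h : Function.Injective N =>
    not_countable h.countable
  refine ⟨a, b, hne, (w a)⁻¹, Set.inv_mem_inv.mpr (hw a), w b, hw b, ?_⟩
  simp only [← hN, hab, smul_eq_mul]
  group

theorem exists_mem_Ioo_apply_mem (hW : IsCountablySyndetic W) {f : ℝ → G}
    (hf : ∀ θ φ, f (θ + φ) = f θ * f φ) {ε : ℝ} (hε : 0 < ε) :
    ∃ θ ∈ Set.Ioo 0 ε, f θ ∈ W⁻¹ * W := by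
  have : Uncountable (Set.Ioo 0 ε) := by
    rw [← Cardinal.aleph0_lt_mk_iff, Cardinal.mk_Ioo_real hε]
    exact Cardinal.aleph0_lt_continuum
  have hsub : ∀ θ φ, (f θ)⁻¹ * f φ = f (φ - θ) := fun θ φ => by
    rw [inv_mul_eq_iff_eq_mul, ← hf, add_sub_cancel]
  obtain ⟨⟨a, ha0, ha⟩, ⟨b, hb0, hb⟩, hne, hab⟩ :=
    hW.exists_ne_inv_mul_mem fun θ : Set.Ioo 0 ε => f θ
  rcases lt_or_gt_of_ne (Subtype.coe_ne_coe.mpr hne) with hlt | hlt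
  · refine ⟨b - a, ⟨sub_pos.mpr hlt, by linarith⟩, ?_⟩
    rwa [← hsub]
  · refine ⟨a - b, ⟨sub_pos.mpr hlt, by linarith⟩, ?_⟩
    simpa only [← hsub, mul_inv_rev, inv_inv] using inv_mem_inv_mul_self hab

end IsCountablySyndetic

end CountablySyndetic

section Monomial

variable {𝕜 ι E H : Type*} [RCLike 𝕜] [NormedAddCommGroup E] [InnerProductSpace 𝕜 E]
  [NormedAddCommGroup H] [InnerProductSpace 𝕜 H]

theorem memℓp_two_monomial (σ : Equiv.Perm ι) (d : ι → (E ≃ₗᵢ[𝕜] E))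
    (f : lp (fun _ : ι => E) 2) : Memℓp (fun i => d i (f (σ.symm i))) 2 := by
  have hf := lp.memℓp f
  rw [memℓp_gen_iff (by norm_num)] at hf ⊢
  simpa only [LinearIsometryEquiv.norm_map, Function.comp_def] using
    (σ.symm.summable_iff (f := fun i => ‖f i‖ ^ (2 : ENNReal).toReal)).mpr hf

/-- The monomial operator on a Hilbert sum of copies of `E`: permute the blocks by `σ`, then apply
`d i` in the block `i`. -/
noncomputable def lpMonomial (σ : Equiv.Perm ι) (d : ι → (E ≃ₗᵢ[𝕜] E)) :
    lp (fun _ : ι => E) 2 ≃ₗᵢ[𝕜] lp (fun _ : ι => E) 2 where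
  toFun f := ⟨fun i => d i (f (σ.symm i)), memℓp_two_monomial σ d f⟩
  map_add' f g := by
    ext i
    exact map_add (d i) (f (σ.symm i)) (g (σ.symm i))
  map_smul' c f := by
    ext i
    exact map_smul (d i) c (f (σ.symm i))
  invFun f := ⟨fun i => (d (σ i)).symm (f (σ i)),
    memℓp_two_monomial σ.symm (fun i => (d (σ i)).symm) f⟩
  left_inv f := by ext i; simp
  right_inv f := by ext i; simp
  norm_map' f := by
    rw [lp.norm_eq_tsum_rpow (by norm_num), lp.norm_eq_tsum_rpow (by norm_num)]
    congr 1
    simpa using σ.symm.tsum_eq (fun i => ‖f i‖ ^ (2 : ENNReal).toReal)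

variable (Φ : H ≃ₗᵢ[𝕜] lp (fun _ : ι => E) 2)

theorem ext_blocks {x y : H} (h : ∀ i, Φ x i = Φ y i) : x = y :=
  Φ.injective (lp.ext (funext h))

/-- The monomial operator on a space identified by `Φ` with a Hilbert sum of copies of `E`. -/
noncomputable def monomialOp (σ : Equiv.Perm ι) (d : ι → (E ≃ₗᵢ[𝕜] E)) : H ≃ₗᵢ[𝕜] H :=
  Φ.trans ((lpMonomial σ d).trans Φ.symm)

theorem monomialOp_apply (σ : Equiv.Perm ι) (d : ι → (E ≃ₗᵢ[𝕜] E)) (x : H) (i : ι) :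
    Φ (monomialOp Φ σ d x) i = d i (Φ x (σ.symm i)) := by
  simp [monomialOp, lpMonomial]

theorem monomialOp_one_apply (d : ι → (E ≃ₗᵢ[𝕜] E)) (x : H) (i : ι) :
    Φ (monomialOp Φ 1 d x) i = d i (Φ x i) :=
  monomialOp_apply Φ 1 d x i

theorem monomialOp_one_one : monomialOp Φ 1 1 = 1 :=
  LinearIsometryEquiv.ext fun x => ext_blocks Φ fun i => monomialOp_one_apply Φ 1 x i

theorem monomialOp_mul (σ τ : Equiv.Perm ι) (d e : ι → (E ≃ₗᵢ[𝕜] E)) :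
    monomialOp Φ σ d * monomialOp Φ τ e =
      monomialOp Φ (σ * τ) (fun i => d i * e (σ.symm i)) := by
  ext x
  refine ext_blocks Φ fun i => ?_
  simp only [LinearIsometryEquiv.coe_mul, Function.comp_apply, monomialOp_apply]
  rfl

theorem monomialOp_inv (σ : Equiv.Perm ι) (d : ι → (E ≃ₗᵢ[𝕜] E)) :
    (monomialOp Φ σ d)⁻¹ = monomialOp Φ σ⁻¹ (fun i => (d (σ i))⁻¹) := by
  rw [inv_eq_iff_mul_eq_one, monomialOp_mul, mul_inv_cancel, ← monomialOp_one_one Φ]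
  congr 1
  funext i
  simp

theorem monomialOp_perm_inv_mul (σ τ : Equiv.Perm ι) :
    (monomialOp Φ σ 1)⁻¹ * monomialOp Φ τ 1 = monomialOp Φ (σ⁻¹ * τ) 1 := by
  rw [monomialOp_inv, monomialOp_mul]
  congr 1

end Monomial

section SupportedOn

variable {𝕜 ι E H : Type*} [RCLike 𝕜] [NormedAddCommGroup E] [InnerProductSpace 𝕜 E]
  [NormedAddCommGroup H] [InnerProductSpace 𝕜 H]

/-- The vectors whose block coordinates, under an identification `Φ` of the space with a Hilbert
sum, vanish outside `S`. -/
def supportedOn (Φ : H ≃ₗᵢ[𝕜] lp (fun _ : ι => E) 2) (S : Set ι) : Submodule 𝕜 H where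
  carrier := {x | ∀ i ∉ S, Φ x i = 0}
  add_mem' {x y} hx hy i hi := by simp [hx i hi, hy i hi]
  zero_mem' i _ := by simp
  smul_mem' c x hx i hi := by simp [hx i hi]

variable (Φ : H ≃ₗᵢ[𝕜] lp (fun _ : ι => E) 2)

theorem mem_supportedOn {S : Set ι} {x : H} : x ∈ supportedOn Φ S ↔ ∀ i ∉ S, Φ x i = 0 :=
  Iff.rfl

theorem symm_single_mem_supportedOn [DecidableEq ι] {S : Set ι} {i : ι} (hi : i ∈ S) (y : E) :
    Φ.symm (lp.single 2 i y) ∈ supportedOn Φ S := fun j hj => by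
  rw [Φ.apply_symm_apply, lp.single_apply_ne _ _ _ (ne_of_mem_of_not_mem hi hj).symm]

theorem supportedOn_mono {S T : Set ι} (h : S ⊆ T) : supportedOn Φ S ≤ supportedOn Φ T :=
  fun _ hx i hi => hx i fun hS => hi (h hS)

theorem supportedOn_inf (S T : Set ι) :
    supportedOn Φ S ⊓ supportedOn Φ T = supportedOn Φ (S ∩ T) := by
  ext x
  simp only [Submodule.mem_inf, mem_supportedOn, Set.mem_inter_iff]
  grind

theorem orthogonal_supportedOn (S : Set ι) : (supportedOn Φ S)ᗮ = supportedOn Φ Sᶜ := by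
  classical
  refine le_antisymm (fun x hx i hi => ?_) fun x hx y hy => ?_
  · have := hx _ (symm_single_mem_supportedOn Φ (not_not.mp hi) (Φ x i))
    rwa [← Φ.inner_map_map, Φ.apply_symm_apply, lp.inner_single_left, inner_self_eq_zero] at this
  · rw [← Φ.inner_map_map, lp.inner_eq_tsum]
    convert tsum_zero with i
    by_cases hi : i ∈ S
    · rw [hx i (not_not.mpr hi), inner_zero_right]
    · rw [hy i hi, inner_zero_left]

theorem isClosed_supportedOn (S : Set ι) : IsClosed (supportedOn Φ S : Set H) := by
  rw [← compl_compl S, ← orthogonal_supportedOn]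
  exact Submodule.isClosed_orthogonal _

instance [CompleteSpace H] (S : Set ι) : (supportedOn Φ S).HasOrthogonalProjection :=
  have := (isClosed_supportedOn Φ S).completeSpace_coe
  inferInstance

theorem monomialOp_mem_supportedOn {S : Set ι} {σ : Equiv.Perm ι} {d : ι → (E ≃ₗᵢ[𝕜] E)} {x : H}
    (hx : x ∈ supportedOn Φ (σ ⁻¹' S)) : monomialOp Φ σ d x ∈ supportedOn Φ S := fun i hi => by
  rw [monomialOp_apply, hx _ (by simpa using hi), map_zero]

/-- The inclusion of a copy of `E` as the block `i`. -/
noncomputable def blockEquiv [DecidableEq ι] (i : ι) : E ≃ₗᵢ[𝕜] supportedOn Φ {i} where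
  toFun y := ⟨Φ.symm (lp.single 2 i y), symm_single_mem_supportedOn Φ (Set.mem_singleton i) y⟩
  invFun x := Φ x i
  map_add' y z := by ext; simp [lp.single_add]
  map_smul' c y := by ext; simp [lp.single_smul]
  left_inv y := by simp
  right_inv x := Subtype.ext <| ext_blocks Φ fun j => by
    rcases eq_or_ne j i with rfl | hj
    · simp
    · simp [hj, x.2 j hj]
  norm_map' y := by simp [lp.norm_single]

end SupportedOn

section HilbertBasis

variable {𝕜 ι J E H : Type*} [RCLike 𝕜] [NormedAddCommGroup E] [InnerProductSpace 𝕜 E]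
  [NormedAddCommGroup H] [InnerProductSpace 𝕜 H]

theorem finiteDimensional_supportedOn_repr (b : HilbertBasis ι 𝕜 H) {S : Set ι} (hS : S.Finite) :
    FiniteDimensional 𝕜 (supportedOn b.repr S) := by
  have := hS.to_subtype
  let coordinates : supportedOn b.repr S →ₗ[𝕜] (S → 𝕜) :=
    { toFun := fun x i => b.repr x i
      map_add' := fun x y => by ext; simp
      map_smul' := fun c x => by ext; simp }
  refine FiniteDimensional.of_injective coordinates fun x y hxy =>
    Subtype.ext (ext_blocks b.repr fun i => ?_)
  by_cases hi : i ∈ S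
  · exact congrFun hxy ⟨i, hi⟩
  · rw [x.2 i hi, y.2 i hi]

theorem not_finiteDimensional_supportedOn_repr (b : HilbertBasis ι 𝕜 H) {S : Set ι}
    (hS : S.Infinite) : ¬ FiniteDimensional 𝕜 (supportedOn b.repr S) := by
  classical
  intro hfin
  let v : S → supportedOn b.repr S := fun i =>
    ⟨b i, by simpa using symm_single_mem_supportedOn b.repr i.2 1⟩
  have hv : LinearIndependent 𝕜 v := .of_comp (supportedOn b.repr S).subtype
    (b.orthonormal.linearIndependent.comp _ Subtype.val_injective)
  exact hS hv.finite

theorem exists_hilbertBasis_of_equiv [CompleteSpace H] (b : HilbertBasis ι 𝕜 H) (e : J ≃ ι) :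
    Nonempty (HilbertBasis J 𝕜 H) := by
  refine ⟨HilbertBasis.mk (b.orthonormal.comp e e.injective) ?_⟩
  rw [EquivLike.range_comp, b.dense_span]

theorem orthonormal_lp_single [DecidableEq ι] (c : HilbertBasis J 𝕜 E) :
    Orthonormal 𝕜 fun p : ι × J => (lp.single 2 p.1 (c p.2) : lp (fun _ : ι => E) 2) := by
  classical
  rw [orthonormal_iff_ite]
  rintro ⟨i, m⟩ ⟨j, n⟩
  rw [lp.inner_single_left]
  rcases eq_or_ne i j with rfl | hij
  · simp [orthonormal_iff_ite.mp c.orthonormal]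
  · simp [hij, lp.single_apply]

theorem span_lp_single_orthogonal_eq_bot [DecidableEq ι] (c : HilbertBasis J 𝕜 E) :
    (Submodule.span 𝕜 (Set.range fun p : ι × J =>
      (lp.single 2 p.1 (c p.2) : lp (fun _ : ι => E) 2)))ᗮ = ⊥ := by
  refine (Submodule.eq_bot_iff _).mpr fun f hf => ?_
  ext i
  refine ext_blocks c.repr fun n => ?_
  have := hf _ (Submodule.subset_span ⟨(i, n), rfl⟩)
  rw [lp.inner_single_left] at this
  simp [c.repr_apply_apply, this]

theorem exists_blocks_supportedOn_eq [CompleteSpace E] (b : HilbertBasis (ι × J) 𝕜 H)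
    (c : HilbertBasis J 𝕜 E) :
    ∃ Φ : H ≃ₗᵢ[𝕜] lp (fun _ : ι => E) 2,
      ∀ S, supportedOn Φ S = supportedOn b.repr (Prod.fst ⁻¹' S) := by
  classical
  let c' := HilbertBasis.mkOfOrthogonalEqBot (orthonormal_lp_single (ι := ι) c)
    (span_lp_single_orthogonal_eq_bot c)
  refine ⟨b.repr.trans c'.repr.symm, fun S => ?_⟩
  ext x
  obtain ⟨f, rfl⟩ := (b.repr.trans c'.repr.symm).symm.surjective x
  have hcoord : ∀ i j, c'.repr f (i, j) = c.repr (f i) j := fun i j => by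
    rw [c'.repr_apply_apply, c.repr_apply_apply, HilbertBasis.coe_mkOfOrthogonalEqBot,
      lp.inner_single_left]
  simp only [mem_supportedOn, LinearIsometryEquiv.apply_symm_apply, Set.mem_preimage, Prod.forall]
  refine forall_congr' fun i => ?_
  simp only [LinearIsometryEquiv.symm_trans, LinearIsometryEquiv.trans_apply,
    LinearIsometryEquiv.symm_symm, LinearIsometryEquiv.apply_symm_apply, hcoord]
  refine ⟨fun h j hi => by simp [h hi], fun h hi => ext_blocks c.repr fun j => ?_⟩
  simpa using h j hi

end HilbertBasis

section Stabilizer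

variable {𝕜 H : Type*} [RCLike 𝕜] [NormedAddCommGroup H] [InnerProductSpace 𝕜 H]
  {K : Submodule 𝕜 H} {u v : H ≃ₗᵢ[𝕜] H}

theorem eq_of_eqOn_orthogonal [K.HasOrthogonalProjection] (h : ∀ x ∈ K, u x = v x)
    (h' : ∀ x ∈ Kᗮ, u x = v x) : u = v := by
  ext x
  obtain ⟨y, hy, z, hz, rfl⟩ := K.exists_add_mem_mem_orthogonal x
  rw [map_add, map_add, h y hy, h' z hz]

theorem apply_mem_of_mem_setwiseStabilizer (hu : u ∈ setwiseStabilizer K) {x : H} (hx : x ∈ K) :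
    u x ∈ K :=
  Submodule.map_le_iff_le_comap.mp (le_of_eq hu) hx

theorem mem_setwiseStabilizer_orthogonal (hu : u ∈ setwiseStabilizer K) :
    u ∈ setwiseStabilizer Kᗮ := by
  rw [setwiseStabilizer, Set.mem_ofPred_eq, Submodule.map_orthogonal_equiv, hu]

theorem pointwiseStabilizer_subset_setwiseStabilizer :
    pointwiseStabilizer K ⊆ setwiseStabilizer K := fun u hu => by
  ext x
  refine ⟨?_, fun hx => ⟨x, hx, hu x hx⟩⟩
  rintro ⟨y, hy, rfl⟩
  exact (hu y hy).symm ▸ hy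

/-- The restriction to `K` of a unitary operator in the setwise stabilizer of `K`. -/
noncomputable def stabilizerRestrict (hu : u ∈ setwiseStabilizer K) : K ≃ₗᵢ[𝕜] K :=
  (u.submoduleMap K).trans (LinearIsometryEquiv.ofEq _ _ hu)

theorem inv_mul_mem_pointwiseStabilizer (h : ∀ x ∈ K, u x = v x) :
    u⁻¹ * v ∈ pointwiseStabilizer K := fun x hx => by
  rw [LinearIsometryEquiv.coe_mul, Function.comp_apply, ← h x hx]
  exact u.symm_apply_apply x

theorem commute_of_mem_pointwiseStabilizer [K.HasOrthogonalProjection]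
    (hu : u ∈ pointwiseStabilizer K) (hv : v ∈ pointwiseStabilizer Kᗮ) : Commute u v := by
  refine eq_of_eqOn_orthogonal (K := K) (fun x hx => ?_) fun x hx => ?_ <;>
    simp only [LinearIsometryEquiv.coe_mul, Function.comp_apply]
  · have hvx : v x ∈ Kᗮᗮ := apply_mem_of_mem_setwiseStabilizer (mem_setwiseStabilizer_orthogonal
      (pointwiseStabilizer_subset_setwiseStabilizer hv)) (K.le_orthogonal_orthogonal hx)
    rw [hu x hx, hu _ (K.orthogonal_orthogonal ▸ hvx)]
  · rw [hv x hx, hv _ (apply_mem_of_mem_setwiseStabilizer (mem_setwiseStabilizer_orthogonal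
      (pointwiseStabilizer_subset_setwiseStabilizer hu)) hx)]

theorem conj_mem_pointwiseStabilizer {L : Submodule 𝕜 H} (hL : ∀ x ∈ L, v x ∈ K)
    (hu : u ∈ pointwiseStabilizer K) : v⁻¹ * u * v ∈ pointwiseStabilizer L := fun x hx => by
  simp only [LinearIsometryEquiv.coe_mul, Function.comp_apply, hu _ (hL x hx)]
  exact v.symm_apply_apply x

end Stabilizer

section BlockCommutator

open scoped commutatorElement

theorem commutatorElement_eq_of_commute {G : Type*} [Group G] {g h k : G}
    (hk : Commute (g⁻¹ * h) k) : ⁅h, k⁆ = ⁅g, k⁆ := by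
  calc ⁅h, k⁆ = g * ((g⁻¹ * h) * k) * h⁻¹ * k⁻¹ := by rw [commutatorElement_def]; group
    _ = ⁅g, k⁆ := by rw [hk.eq, commutatorElement_def]; group

theorem commutatorElement_mem_pow_four {G : Type*} [Group G] {V : Set G} (hV : V⁻¹ = V) {g h : G}
    (hg : g ∈ V) (hh : h ∈ V) : ⁅g, h⁆ ∈ V ^ 4 := by
  have hinv : ∀ {k}, k ∈ V → k⁻¹ ∈ V := fun {k} hk => by rwa [← hV, Set.inv_mem_inv]
  simp only [commutatorElement_def, pow_succ, pow_zero, one_mul]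
  exact Set.mul_mem_mul (Set.mul_mem_mul (Set.mul_mem_mul hg hh) (hinv hg)) (hinv hh)

/-- The permutation of `A × ℤ` that translates the line over `a` by `τ a`. -/
def shift {A : Type*} (τ : A → ℤ) : Equiv.Perm (A × ℤ) :=
  Equiv.prodShear (Equiv.refl A) fun a => Equiv.addRight (τ a)

theorem shift_inv_mul {A : Type*} (σ τ : A → ℤ) : (shift σ)⁻¹ * shift τ = shift (τ - σ) := by
  ext p
  · rfl
  · exact add_sub_assoc p.2 (τ p.1) (σ p.1)

variable {𝕜 ι A E H : Type*} [RCLike 𝕜] [NormedAddCommGroup E] [InnerProductSpace 𝕜 E]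
  [NormedAddCommGroup H] [InnerProductSpace 𝕜 H] {W : Set (H ≃ₗᵢ[𝕜] H)}

theorem monomialOp_mem_pointwiseStabilizer (Φ : H ≃ₗᵢ[𝕜] lp (fun _ : ι => E) 2) {S : Set ι}
    {σ : Equiv.Perm ι} {d : ι → (E ≃ₗᵢ[𝕜] E)} (hσ : ∀ i ∈ S, σ i = i) (hd : ∀ i ∈ S, d i = 1) :
    monomialOp Φ σ d ∈ pointwiseStabilizer (supportedOn Φ S) := fun x hx => by
  refine ext_blocks Φ fun i => ?_
  rw [monomialOp_apply]
  by_cases hi : i ∈ S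
  · rw [hd i hi, σ.symm_apply_eq.mpr (hσ i hi).symm]
    rfl
  · have hi' : σ.symm i ∉ S := fun h => hi (by rwa [← hσ _ h, σ.apply_symm_apply] at h)
    rw [hx i hi, hx _ hi', map_zero]

theorem exists_eq_monomialOp_mulSingle [CompleteSpace H] [DecidableEq ι]
    (Φ : H ≃ₗᵢ[𝕜] lp (fun _ : ι => E) 2) (i : ι) {u : H ≃ₗᵢ[𝕜] H}
    (hu : u ∈ pointwiseStabilizer (supportedOn Φ {i}ᶜ)) :
    ∃ v : E ≃ₗᵢ[𝕜] E, u = monomialOp Φ 1 (Pi.mulSingle i v) := by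
  have hui : u ∈ setwiseStabilizer (supportedOn Φ {i}) := by
    simpa only [orthogonal_supportedOn, compl_compl] using
      mem_setwiseStabilizer_orthogonal (pointwiseStabilizer_subset_setwiseStabilizer hu)
  refine ⟨((blockEquiv Φ i).trans (stabilizerRestrict hui)).trans (blockEquiv Φ i).symm,
    eq_of_eqOn_orthogonal (K := supportedOn Φ {i}ᶜ) (fun x hx => ?_) fun x hx => ?_⟩
  · rw [hu x hx, monomialOp_mem_pointwiseStabilizer Φ (fun _ _ => rfl)
      (fun j hj => Pi.mulSingle_eq_of_ne hj _) x hx]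
  · rw [orthogonal_supportedOn, compl_compl] at hx
    refine ext_blocks Φ fun j => ?_
    rw [monomialOp_one_apply]
    rcases eq_or_ne j i with rfl | hj
    · have hblock : blockEquiv Φ j (Φ x j) = ⟨x, hx⟩ :=
        (blockEquiv Φ j).apply_symm_apply ⟨x, hx⟩
      rw [Pi.mulSingle_eq_same, LinearIsometryEquiv.trans_apply, LinearIsometryEquiv.trans_apply,
        hblock]
      rfl
    · rw [hx j hj, map_zero, apply_mem_of_mem_setwiseStabilizer hui hx j hj]

theorem IsCountablySyndetic.exists_forall_diagonal_eqOn (hW : IsCountablySyndetic W)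
    (Φ : H ≃ₗᵢ[𝕜] lp (fun _ : ι => E) 2) (π : ι → ℕ) :
    ∃ n, ∀ d : ι → (E ≃ₗᵢ[𝕜] E), ∃ w ∈ W⁻¹ * W,
      ∀ x ∈ supportedOn Φ (π ⁻¹' {n}), monomialOp Φ 1 d x = w x := by
  obtain ⟨s, hs⟩ := hW
  obtain ⟨n, hn⟩ : ∃ n, ∀ d : ι → (E ≃ₗᵢ[𝕜] E), ∃ w ∈ W,
      ∀ x ∈ supportedOn Φ (π ⁻¹' {n}), monomialOp Φ 1 d x = (s n * w) x := by
    -- Diagonalize: a block sequence that fails for every `n` at once lies in no translate of `W`.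
    by_contra! h
    choose d hd using h
    obtain ⟨n, w, hw, hwn⟩ := hs (monomialOp Φ 1 fun i => d (π i) i)
    obtain ⟨x, hx, hne⟩ := hd n w hw
    refine hne (ext_blocks Φ fun i => ?_)
    rw [show s n * w = _ from hwn, monomialOp_one_apply, monomialOp_one_apply]
    by_cases hi : π i = n
    · rw [hi]
    · rw [hx i hi, map_zero, map_zero]
  refine ⟨n, fun d => ?_⟩
  obtain ⟨w, hw, hwd⟩ := hn d
  obtain ⟨v, hv, hv1⟩ := hn 1
  refine ⟨v⁻¹ * w, Set.mul_mem_mul (Set.inv_mem_inv.mpr hv) hw, fun x hx => ?_⟩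
  have hdx := monomialOp_mem_supportedOn Φ (σ := 1) (d := d) (S := π ⁻¹' {n}) hx
  have hfix := inv_mul_mem_pointwiseStabilizer fun y hy => (hv1 y hy).symm
  rw [monomialOp_one_one, mul_one] at hfix
  calc monomialOp Φ 1 d x = (s n * v)⁻¹ (monomialOp Φ 1 d x) := (hfix _ hdx).symm
    _ = ((s n * v)⁻¹ * (s n * w)) x := by rw [hwd x hx]; rfl
    _ = (v⁻¹ * w) x := by group

theorem commutatorElement_monomialOp_shift [DecidableEq A]
    (Φ : H ≃ₗᵢ[𝕜] lp (fun _ : A × ℤ => E) 2) {τ : A → ℤ} {a : A} (hτ : τ a = 1 ∨ τ a = -1)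
    (v : E ≃ₗᵢ[𝕜] E) :
    ⁅monomialOp Φ 1 (fun p => if p.1 = a ∧ 0 ≤ τ a * p.2 then v else 1),
      monomialOp Φ (shift τ) 1⁆ = monomialOp Φ 1 (Pi.mulSingle (a, 0) v) := by
  have hstep : ∀ k : ℤ, (if 0 ≤ τ a * k then v else 1) *
      (if 0 ≤ τ a * (k - τ a) then v else 1)⁻¹ = if k = 0 then v else 1 := fun k => by
    rcases hτ with h | h <;> rw [h] <;> grind [mul_one, inv_one, mul_inv_cancel]
  simp only [commutatorElement_def, monomialOp_inv, monomialOp_mul]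
  congr 1
  · simp
  · funext ⟨b, k⟩
    by_cases hb : b = a
    · subst hb
      simpa [shift, Pi.mulSingle_apply, sub_eq_add_neg] using hstep k
    · simp [shift, hb]

theorem uncountable_nat_arrow_bool : Uncountable (ℕ → Bool) := by
  rw [← Cardinal.aleph0_lt_mk_iff]
  simp [Cardinal.aleph0_lt_continuum]

theorem IsCountablySyndetic.exists_monomialOp_shift_mem (hW : IsCountablySyndetic W)
    (Φ : H ≃ₗᵢ[𝕜] lp (fun _ : (ℕ × ℕ) × ℤ => E) 2) (n : ℕ) :
    ∃ τ : ℕ × ℕ → ℤ, (∀ p, p.1 ≠ n → τ p = 0) ∧ (∃ i, τ (n, i) = 1 ∨ τ (n, i) = -1) ∧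
      monomialOp Φ (shift τ) 1 ∈ W⁻¹ * W := by
  have := uncountable_nat_arrow_bool
  let τ (t : ℕ → Bool) (p : ℕ × ℕ) : ℤ := if p.1 = n ∧ t p.2 then 1 else 0
  obtain ⟨a, b, hne, hab⟩ := hW.exists_ne_inv_mul_mem fun t => monomialOp Φ (shift (τ t)) 1
  obtain ⟨i, hi⟩ := Function.ne_iff.mp hne
  refine ⟨τ b - τ a, fun p hp => by simp [τ, hp], ⟨i, ?_⟩, ?_⟩
  · cases ha : a i <;> cases hb : b i <;> simp_all [τ]
  · rwa [← shift_inv_mul, ← monomialOp_perm_inv_mul]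

theorem IsCountablySyndetic.exists_pointwiseStabilizer_subset_pow_four [CompleteSpace H]
    (hW : IsCountablySyndetic W) (Φ : H ≃ₗᵢ[𝕜] lp (fun _ : (ℕ × ℕ) × ℤ => E) 2) :
    ∃ i, pointwiseStabilizer (supportedOn Φ {i}ᶜ) ⊆ (W⁻¹ * W) ^ 4 := by
  obtain ⟨n, hn⟩ := hW.exists_forall_diagonal_eqOn Φ fun p => p.1.1
  obtain ⟨τ, hτ, ⟨i, hi⟩, hs⟩ := hW.exists_monomialOp_shift_mem Φ n
  refine ⟨((n, i), 0), fun u hu => ?_⟩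
  obtain ⟨v, rfl⟩ := exists_eq_monomialOp_mulSingle Φ _ hu
  obtain ⟨w, hw, hwd⟩ := hn fun p => if p.1 = (n, i) ∧ 0 ≤ τ (n, i) * p.2 then v else 1
  have hfix : monomialOp Φ (shift τ) 1 ∈
      pointwiseStabilizer (supportedOn Φ ((fun p => p.1.1) ⁻¹' {n}))ᗮ := by
    rw [orthogonal_supportedOn]
    refine monomialOp_mem_pointwiseStabilizer Φ (fun p hp => ?_) fun _ _ => rfl
    simp [shift, hτ _ hp]
  rw [← commutatorElement_monomialOp_shift Φ hi, ← commutatorElement_eq_of_commute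
    (commute_of_mem_pointwiseStabilizer (inv_mul_mem_pointwiseStabilizer hwd) hfix)]
  exact commutatorElement_mem_pow_four (by rw [mul_inv_rev, inv_inv]) hw hs

end BlockCommutator

section AlmostDisjoint

open Cardinal

universe u

/-- The branch of the binary tree determined by `t`, as a set of nodes, the nodes at height `n`
being the words of length `n`. -/
def binaryBranch (t : ℕ → Bool) : Set (List Bool) :=
  Set.range fun n => (List.range n).map t

theorem infinite_binaryBranch (t : ℕ → Bool) : (binaryBranch t).Infinite :=
  Set.infinite_range_of_injective fun m n h => by simpa using congrArg List.length h

theorem finite_binaryBranch_inter {s t : ℕ → Bool} (h : s ≠ t) :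
    (binaryBranch s ∩ binaryBranch t).Finite := by
  obtain ⟨i, hi⟩ := Function.ne_iff.mp h
  refine ((Set.finite_Iic i).image fun n => (List.range n).map s).subset ?_
  rintro _ ⟨⟨m, rfl⟩, n, hn⟩
  obtain rfl : n = m := by simpa using congrArg List.length hn
  refine ⟨n, ?_, rfl⟩
  by_contra hlt
  exact hi (List.map_inj_left.mp hn i (by simpa using hlt)).symm

theorem exists_almostDisjoint (J : Type u) [Infinite J] :
    ∃ (T : Type u) (_ : Uncountable T) (A : T → Set J),
      (∀ t, #(A t) = #J) ∧ Pairwise fun s t => (A s ∩ A t).Finite := by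
  by_cases hJ : Countable J
  · obtain ⟨e⟩ := nonempty_equiv_of_countable (α := J) (β := List Bool)
    have := uncountable_nat_arrow_bool
    refine ⟨ULift (ℕ → Bool), inferInstance, fun t => e ⁻¹' binaryBranch t.down, fun t => ?_,
      fun s t hst => ?_⟩
    · have := ((infinite_binaryBranch t.down).preimage
        (e.surjective.range_eq ▸ Set.subset_univ _)).to_subtype
      rw [mk_eq_aleph0, mk_eq_aleph0]
    · exact Set.Finite.preimage (f := e) e.injective.injOn
        (finite_binaryBranch_inter (ULift.down_injective.ne hst))
  · obtain ⟨e⟩ := Cardinal.eq.mp (show #(J × J) = #J by simp)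
    refine ⟨J, not_countable_iff.mp hJ, fun j => e '' Prod.mk j '' Set.univ, fun j => ?_,
      fun j k hjk => ?_⟩
    · rw [mk_image_eq e.injective, mk_image_eq (Prod.mk_right_injective j), mk_univ]
    · change (e '' Prod.mk j '' Set.univ ∩ e '' Prod.mk k '' Set.univ).Finite
      rw [← Set.image_inter e.injective]
      convert Set.finite_empty
      grind

theorem mk_compl_eq_of_finite_inter {J : Type u} [Infinite J] {A B : Set J} (hA : #A = #J)
    (hAB : (A ∩ B).Finite) : #(Bᶜ : Set J) = #J := by
  refine (mk_set_le _).antisymm (not_lt.mp fun hlt => ?_)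
  have hsub : A ⊆ A ∩ B ∪ Bᶜ := fun i hi => by grind
  refine lt_irrefl #J ?_
  calc #J = #A := hA.symm
    _ ≤ #(A ∩ B : Set J) + #(Bᶜ : Set J) := (mk_le_mk_of_subset hsub).trans (mk_union_le _ _)
    _ < #J := add_lt_of_lt (aleph0_le_mk J) (hAB.lt_aleph0.trans_le (aleph0_le_mk J)) hlt

theorem exists_perm_mem_iff {J : Type u} {S A : Set J} (h : #S = #A)
    (hc : #(Sᶜ : Set J) = #(Aᶜ : Set J)) : ∃ σ : Equiv.Perm J, ∀ i, σ i ∈ A ↔ i ∈ S := by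
  classical
  obtain ⟨e⟩ := Cardinal.eq.mp h
  obtain ⟨f⟩ := Cardinal.eq.mp hc
  refine ⟨Equiv.subtypeCongr e f, fun i => ?_⟩
  by_cases hi : i ∈ S
  · simp [Equiv.subtypeCongr, Equiv.sumCompl_symm_apply_of_pos, hi]
  · have hf : (f ⟨i, hi⟩ : J) ∉ A := (f ⟨i, hi⟩).2
    simp [Equiv.subtypeCongr, Equiv.sumCompl_symm_apply_of_neg, hi, hf]

variable {𝕜 H : Type*} {J : Type u} [RCLike 𝕜] [NormedAddCommGroup H] [InnerProductSpace 𝕜 H]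
  {W : Set (H ≃ₗᵢ[𝕜] H)}

theorem IsCountablySyndetic.exists_inv_apply_mem_supportedOn_compl [Infinite J]
    (hW : IsCountablySyndetic W) (b : HilbertBasis J 𝕜 H) {S : Set J} (hS : #S = #J)
    (hSc : #(Sᶜ : Set J) = #J) :
    ∃ h ∈ W⁻¹ * W, ∃ A ⊆ S, A.Finite ∧
      ∀ x ∈ supportedOn b.repr (S \ A), h⁻¹ x ∈ supportedOn b.repr Sᶜ := by
  obtain ⟨T, _, A, hA, hfin⟩ := exists_almostDisjoint J
  have hσ : ∀ t, ∃ σ : Equiv.Perm J, ∀ i, σ i ∈ A t ↔ i ∈ S := fun t => by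
    obtain ⟨s, hst⟩ := exists_ne t
    exact exists_perm_mem_iff (hS.trans (hA t).symm)
      (hSc.trans (mk_compl_eq_of_finite_inter (hA s) (hfin hst)).symm)
  choose σ hσ using hσ
  obtain ⟨s, t, hst, hmem⟩ := hW.exists_ne_inv_mul_mem fun t => monomialOp b.repr (σ t) 1
  rw [monomialOp_perm_inv_mul] at hmem
  refine ⟨_, hmem, {i ∈ S | (σ t)⁻¹ (σ s i) ∈ S}, fun i hi => hi.1, ?_, fun x hx => ?_⟩
  · refine ((hfin hst).preimage (σ s).injective.injOn).subset fun i hi => ⟨(hσ s i).mpr hi.1, ?_⟩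
    simpa using (hσ t _).mpr hi.2
  · rw [monomialOp_inv]
    refine monomialOp_mem_supportedOn b.repr (supportedOn_mono b.repr (fun i hi => ?_) hx)
    simpa [hi.1] using hi.2

end AlmostDisjoint

section Rotation

variable {𝕜 A : Type*} [RCLike 𝕜] [Ring A] [Algebra 𝕜 A]

/-- Rodrigues' formula for `exp (θ J)` when `J ^ 3 = -J`, taken as a definition. -/
noncomputable def rodrigues (𝕜 : Type*) {A : Type*} [RCLike 𝕜] [Ring A] [Algebra 𝕜 A] (J : A)
    (θ : ℝ) : A :=
  1 + (Real.sin θ : 𝕜) • J + (1 - Real.cos θ : 𝕜) • J ^ 2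

theorem rodrigues_add {J : A} (hJ : J ^ 3 = -J) (θ φ : ℝ) :
    rodrigues 𝕜 J (θ + φ) = rodrigues 𝕜 J θ * rodrigues 𝕜 J φ := by
  have h12 : J * J ^ 2 = -J := by rw [← pow_succ', hJ]
  have h21 : J ^ 2 * J = -J := by rw [← pow_succ, hJ]
  have h22 : J ^ 2 * J ^ 2 = -J ^ 2 := by
    calc J ^ 2 * J ^ 2 = J ^ 3 * J := by rw [← pow_add, ← pow_succ]
      _ = -J ^ 2 := by rw [hJ, neg_mul, sq]
  simp only [rodrigues, mul_add, add_mul, one_mul, mul_one, smul_mul_smul_comm, h12, h21, h22,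
    ← sq J, Real.sin_add, Real.cos_add]
  push_cast
  module

theorem rodrigues_zero (J : A) : rodrigues 𝕜 J 0 = 1 := by
  simp [rodrigues]

theorem rodrigues_mem_unitary [StarRing A] [StarModule 𝕜 A] {J : A} (hJ : J ^ 3 = -J)
    (hstar : star J = -J) (θ : ℝ) : rodrigues 𝕜 J θ ∈ unitary A := by
  have h : star (rodrigues 𝕜 J θ) = rodrigues 𝕜 J (-θ) := by
    simp [rodrigues, hstar]
  rw [Unitary.mem_iff, h, ← rodrigues_add hJ, ← rodrigues_add hJ, neg_add_cancel, add_neg_cancel,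
    rodrigues_zero]
  exact ⟨rfl, rfl⟩

variable {F H : Type*} [NormedAddCommGroup F] [InnerProductSpace 𝕜 F] [CompleteSpace F]
  [NormedAddCommGroup H] [InnerProductSpace 𝕜 H] [CompleteSpace H]

open ContinuousLinearMap (adjoint)

/-- The quarter turn of the sum of the ranges of `i` and `e` which takes `i x` to `e x` and `e y` to
`-i y`, extended by zero to the orthogonal complement, for `i` and `e` with orthogonal ranges. -/
noncomputable def quarterTurn (i e : F →ₗᵢ[𝕜] H) : H →L[𝕜] H :=
  e.toContinuousLinearMap ∘L adjoint i.toContinuousLinearMap -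
    i.toContinuousLinearMap ∘L adjoint e.toContinuousLinearMap

theorem star_quarterTurn (i e : F →ₗᵢ[𝕜] H) : star (quarterTurn i e) = -quarterTurn i e := by
  simp [quarterTurn, ContinuousLinearMap.star_eq_adjoint, ContinuousLinearMap.adjoint_comp]

theorem adjoint_apply_self (i : F →ₗᵢ[𝕜] H) (x : F) :
    adjoint i.toContinuousLinearMap (i x) = x :=
  ext_inner_left 𝕜 fun v => by
    rw [ContinuousLinearMap.adjoint_inner_right]
    exact i.inner_map_map v x

theorem adjoint_apply_eq_zero {i : F →ₗᵢ[𝕜] H} {y : H} (hy : ∀ x, inner 𝕜 (i x) y = 0) :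
    adjoint i.toContinuousLinearMap y = 0 :=
  ext_inner_left 𝕜 fun v => by
    rw [ContinuousLinearMap.adjoint_inner_right, inner_zero_right]
    exact hy v

variable {i e : F →ₗᵢ[𝕜] H} (hie : ∀ x y, inner 𝕜 (i x) (e y) = 0)
include hie

theorem quarterTurn_apply_left (x : F) : quarterTurn i e (i x) = e x := by
  have h : adjoint e.toContinuousLinearMap (i x) = 0 :=
    adjoint_apply_eq_zero fun y => inner_eq_zero_symm.mp (hie x y)
  simp [quarterTurn, adjoint_apply_self, h]

theorem quarterTurn_apply_right (y : F) : quarterTurn i e (e y) = -i y := by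
  simp [quarterTurn, adjoint_apply_self, adjoint_apply_eq_zero (hie · y)]

theorem quarterTurn_pow_three : quarterTurn i e ^ 3 = -quarterTurn i e := by
  ext v
  have hv : quarterTurn i e v =
      e (adjoint i.toContinuousLinearMap v) - i (adjoint e.toContinuousLinearMap v) := rfl
  rw [pow_succ, pow_two, mul_apply_eq_comp, mul_apply_eq_comp, neg_apply, hv, map_sub, map_sub,
    quarterTurn_apply_right hie, quarterTurn_apply_left hie, map_neg,
    quarterTurn_apply_right hie, quarterTurn_apply_left hie]
  abel

/-- The rotation by the angle `θ` in the sum of the orthogonal ranges of `i` and `e`. -/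
noncomputable def planeRotation (θ : ℝ) : H ≃ₗᵢ[𝕜] H :=
  Unitary.linearIsometryEquiv ⟨rodrigues 𝕜 (quarterTurn i e) θ,
    rodrigues_mem_unitary (quarterTurn_pow_three hie) (star_quarterTurn i e) θ⟩

theorem planeRotation_add (θ φ : ℝ) :
    planeRotation hie (θ + φ) = planeRotation hie θ * planeRotation hie φ := by
  rw [planeRotation, planeRotation, planeRotation, ← map_mul]
  exact congrArg _ (Subtype.ext (rodrigues_add (quarterTurn_pow_three hie) θ φ))

theorem planeRotation_apply_add (θ : ℝ) (x y : F) {z : H} (hz : ∀ x, inner 𝕜 (i x) z = 0)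
    (hz' : ∀ y, inner 𝕜 (e y) z = 0) :
    planeRotation hie θ (i x + e y + z) =
      i ((Real.cos θ : 𝕜) • x - (Real.sin θ : 𝕜) • y) +
        e ((Real.sin θ : 𝕜) • x + (Real.cos θ : 𝕜) • y) + z := by
  have hJ : quarterTurn i e (i x + e y + z) = e x - i y := by
    have hJz : quarterTurn i e z = 0 := by
      simp [quarterTurn, adjoint_apply_eq_zero hz, adjoint_apply_eq_zero hz']
    rw [map_add, map_add, quarterTurn_apply_left hie, quarterTurn_apply_right hie, hJz, add_zero,
      sub_eq_add_neg]
  have hJJ : quarterTurn i e (e x - i y) = -i x - e y := by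
    rw [map_sub, quarterTurn_apply_left hie, quarterTurn_apply_right hie]
  change rodrigues 𝕜 (quarterTurn i e) θ (i x + e y + z) = _
  simp only [rodrigues, pow_two, add_apply, smul_apply, one_apply_eq_self, mul_apply_eq_comp, hJ,
    hJJ]
  simp only [map_add, map_sub, map_smul]
  module

end Rotation

section Extension

variable {𝕜 F G H : Type*} [RCLike 𝕜] [NormedAddCommGroup F] [InnerProductSpace 𝕜 F]
  [NormedAddCommGroup G] [InnerProductSpace 𝕜 G] [NormedAddCommGroup H] [InnerProductSpace 𝕜 H]

theorem exists_extend_orthogonal {K L : Submodule 𝕜 H} [K.HasOrthogonalProjection]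
    [L.HasOrthogonalProjection] (a : K ≃ₗᵢ[𝕜] L) (a' : Kᗮ ≃ₗᵢ[𝕜] Lᗮ) :
    ∃ g : H ≃ₗᵢ[𝕜] H, (∀ x : K, g x = a x) ∧ ∀ x : Kᗮ, g x = a' x := by
  refine ⟨K.orthogonalDecomposition.trans
    ((LinearIsometryEquiv.withLpProdCongr 2 a a').trans L.orthogonalDecomposition.symm),
    fun x => ?_, fun x => ?_⟩
  · rw [LinearIsometryEquiv.trans_apply, LinearIsometryEquiv.trans_apply,
      LinearIsometryEquiv.symm_apply_eq, Submodule.orthogonalDecomposition_apply,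
      Submodule.orthogonalDecomposition_apply]
    simp [Submodule.orthogonalProjectionOnto_orthogonal_apply_eq_zero x.2,
      Submodule.orthogonalProjectionOnto_orthogonal_apply_eq_zero (a x).2]
  · rw [LinearIsometryEquiv.trans_apply, LinearIsometryEquiv.trans_apply,
      LinearIsometryEquiv.symm_apply_eq, Submodule.orthogonalDecomposition_apply,
      Submodule.orthogonalDecomposition_apply]
    simp [Submodule.orthogonalProjectionOnto_apply_of_mem_orthogonal x.2,
      Submodule.orthogonalProjectionOnto_apply_of_mem_orthogonal (a' x).2]

theorem exists_linearIsometry_range_apply_eq {m : F →ₗ[𝕜] G} {m' : F →ₗ[𝕜] H}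
    (hnorm : ∀ x, ‖m x‖ = ‖m' x‖) :
    ∃ L : LinearMap.range m →ₗᵢ[𝕜] H, ∀ x, L (m.rangeRestrict x) = m' x := by
  obtain ⟨r, hr⟩ := m.rangeRestrict.exists_rightInverse_of_surjective m.range_rangeRestrict
  have hr' : ∀ y, m (r y) = y := fun y => congrArg Subtype.val (LinearMap.congr_fun hr y)
  refine ⟨⟨m' ∘ₗ r, fun y => ?_⟩, fun x => ?_⟩
  · rw [LinearMap.comp_apply, ← hnorm, hr', Submodule.coe_norm]
  · change m' (r (m.rangeRestrict x)) = m' x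
    rw [← sub_eq_zero, ← map_sub, ← norm_eq_zero, ← hnorm, map_sub, hr', norm_eq_zero]
    exact sub_self (m x)

theorem exists_mem_pointwiseStabilizer_apply_eq [FiniteDimensional 𝕜 F] {M : Submodule 𝕜 H}
    {m m' : F →ₗ[𝕜] H} (hm : ∀ x, m x ∈ M) (hm' : ∀ x, m' x ∈ M) (hnorm : ∀ x, ‖m x‖ = ‖m' x‖) :
    ∃ g ∈ pointwiseStabilizer Mᗮ, ∀ x, g (m x) = m' x := by
  let V := LinearMap.range m ⊔ LinearMap.range m'
  have hVM : V ≤ M := sup_le (LinearMap.range_le_iff_comap.mpr (by ext; simp [hm]))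
    (LinearMap.range_le_iff_comap.mpr (by ext; simp [hm']))
  let k : F →ₗ[𝕜] V := m.codRestrict V fun x => le_sup_left (a := LinearMap.range m) ⟨x, rfl⟩
  let k' : F →ₗ[𝕜] V := m'.codRestrict V fun x => le_sup_right (a := LinearMap.range m) ⟨x, rfl⟩
  obtain ⟨L, hL⟩ := exists_linearIsometry_range_apply_eq (m := k) (m' := k') hnorm
  obtain ⟨g, hg, hg'⟩ := exists_extend_orthogonal (L.extend.toLinearIsometryEquiv rfl)
    (LinearIsometryEquiv.refl 𝕜 Vᗮ)
  refine ⟨g, fun x hx => hg' ⟨x, Submodule.orthogonal_le hVM hx⟩, fun x => ?_⟩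
  calc g (m x) = L.extend (k.rangeRestrict x : V) := hg (k x)
    _ = m' x := by rw [L.extend_apply, hL]; rfl

theorem exists_eq_mul_of_mem_setwiseStabilizer {K : Submodule 𝕜 H} [K.HasOrthogonalProjection]
    {u : H ≃ₗᵢ[𝕜] H} (hu : u ∈ setwiseStabilizer K) :
    ∃ w ∈ pointwiseStabilizer Kᗮ, ∃ v ∈ pointwiseStabilizer K, u = w * v := by
  obtain ⟨w, hw, hw'⟩ := exists_extend_orthogonal (stabilizerRestrict hu)
    (LinearIsometryEquiv.refl 𝕜 Kᗮ)
  exact ⟨w, fun x hx => hw' ⟨x, hx⟩, w⁻¹ * u,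
    inv_mul_mem_pointwiseStabilizer fun x hx => hw ⟨x, hx⟩, (mul_inv_cancel_left w u).symm⟩

theorem mem_pointwiseStabilizer_inf_orthogonal {F K : Submodule 𝕜 H} [F.HasOrthogonalProjection]
    [K.HasOrthogonalProjection] (hFK : F ≤ K) {g : H ≃ₗᵢ[𝕜] H} (hF : g ∈ pointwiseStabilizer F)
    (hK : g ∈ pointwiseStabilizer Kᗮ) : g ∈ pointwiseStabilizer (K ⊓ Fᗮ)ᗮ := by
  intro x hx
  obtain ⟨y, hy, z, hz, rfl⟩ := K.exists_add_mem_mem_orthogonal x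
  obtain ⟨f, hf, m, hm, rfl⟩ := F.exists_add_mem_mem_orthogonal y
  have hmK : m ∈ K := (K.add_mem_iff_right (hFK hf)).mp hy
  have hmm : inner 𝕜 m (f + m + z) = 0 := hx m ⟨hmK, hm⟩
  rw [inner_add_right, inner_add_right, (F.mem_orthogonal' m).mp hm f hf, hz m hmK, zero_add,
    add_zero, inner_self_eq_zero] at hmm
  rw [hmm, add_zero, map_add, hF f hf, hK z hz]

end Extension

section SquareRoot

variable {𝕜 F : Type*} [RCLike 𝕜] [NormedAddCommGroup F] [InnerProductSpace 𝕜 F]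

theorem exists_norm_sq_eq_re_inner [FiniteDimensional 𝕜 F] {P : F →ₗ[𝕜] F} (hP : P.IsPositive) :
    ∃ B : F →ₗ[𝕜] F, ∀ x, ‖B x‖ ^ 2 = RCLike.re (inner 𝕜 (P x) x) := by
  let b := hP.isSymmetric.eigenvectorBasis rfl
  let μ := hP.isSymmetric.eigenvalues rfl
  refine ⟨b.toBasis.constr 𝕜 fun k => (√(μ k) : 𝕜) • b k, fun x => ?_⟩
  have hB : ∀ k, b.repr (b.toBasis.constr 𝕜 (fun k => (√(μ k) : 𝕜) • b k) x) k =
      √(μ k) * b.repr x k := fun k => by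
    simp [Module.Basis.constr_apply_fintype, RCLike.real_smul_eq_coe_mul, mul_comm,
      Pi.single_apply]
  rw [← b.repr.norm_map, EuclideanSpace.norm_sq_eq, ← b.repr.inner_map_map, PiLp.inner_apply,
    map_sum]
  refine Finset.sum_congr rfl fun k _ => ?_
  rw [hB, hP.isSymmetric.eigenvectorBasis_apply_self_apply, ← smul_eq_mul, ← smul_eq_mul,
    inner_smul_left, RCLike.conj_ofReal, RCLike.re_ofReal_mul, norm_smul, mul_pow,
    RCLike.norm_ofReal, sq_abs, Real.sq_sqrt (hP.nonneg_eigenvalues rfl k), inner_self_eq_norm_sq]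

theorem exists_norm_sq_eq_sub [FiniteDimensional 𝕜 F] {Z : F →ₗ[𝕜] F} {r : ℝ}
    (hZ : ∀ x, ‖Z x‖ ≤ r * ‖x‖) :
    ∃ B : F →ₗ[𝕜] F, ∀ x, ‖B x‖ ^ 2 = r ^ 2 * ‖x‖ ^ 2 - ‖Z x‖ ^ 2 := by
  let P : F →ₗ[𝕜] F := ((r ^ 2 : ℝ) : 𝕜) • LinearMap.id - LinearMap.adjoint Z ∘ₗ Z
  have hre : ∀ x, RCLike.re (inner 𝕜 (P x) x) = r ^ 2 * ‖x‖ ^ 2 - ‖Z x‖ ^ 2 := fun x => by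
    simp [P, inner_sub_left, LinearMap.adjoint_inner_left, inner_smul_left]
  have hpos : P.IsPositive := by
    refine ⟨?_, fun x => ?_⟩
    · exact (LinearMap.IsSymmetric.id.smul (RCLike.conj_ofReal _)).sub
        (LinearMap.isPositive_adjoint_comp_self Z).isSymmetric
    · rw [hre, sub_nonneg, ← mul_pow]
      exact pow_le_pow_left₀ (norm_nonneg _) (hZ x) 2
  simpa only [hre] using exists_norm_sq_eq_re_inner hpos

theorem norm_smul_sub_smul_le {c s : ℝ} (hc : 0 ≤ c) (hs : 0 < s) (hcs : s ^ 2 + c ^ 2 = 1)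
    {x y : F} (h : ‖y - x‖ ≤ (1 - c) * ‖x‖) :
    ‖((c ^ 2 / s : ℝ) : 𝕜) • x - ((c / s : ℝ) : 𝕜) • y‖ ≤ s * ‖x‖ := by
  have hc1 : c ≤ 1 := by nlinarith
  have hsplit : ((c ^ 2 / s : ℝ) : 𝕜) • x - ((c / s : ℝ) : 𝕜) • y =
      -(((c / s : ℝ) : 𝕜) • ((y - x) + ((1 - c : ℝ) : 𝕜) • x)) := by
    push_cast
    module
  have hx : ‖((1 - c : ℝ) : 𝕜) • x‖ = (1 - c) * ‖x‖ := by
    rw [norm_smul, RCLike.norm_ofReal, abs_of_nonneg (by linarith)]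
  rw [hsplit, norm_neg, norm_smul, RCLike.norm_ofReal, abs_of_nonneg (by positivity)]
  calc c / s * ‖(y - x) + ((1 - c : ℝ) : 𝕜) • x‖
      ≤ c / s * ((1 - c) * ‖x‖ + (1 - c) * ‖x‖) := by
        gcongr
        exact (norm_add_le _ _).trans (by rw [hx]; gcongr)
    _ = (2 * c * (1 - c)) / s * ‖x‖ := by ring
    _ ≤ s * ‖x‖ := by
        gcongr
        rw [div_le_iff₀ hs]
        nlinarith

end SquareRoot

section Factorization

variable {𝕜 F H : Type*} [RCLike 𝕜] [NormedAddCommGroup F] [InnerProductSpace 𝕜 F]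
  [NormedAddCommGroup H] [InnerProductSpace 𝕜 H]

theorem norm_add_sq_of_inner_eq_zero {x y : H} (h : inner 𝕜 x y = 0) :
    ‖x + y‖ ^ 2 = ‖x‖ ^ 2 + ‖y‖ ^ 2 := by
  simpa only [sq] using norm_add_sq_eq_norm_sq_add_norm_sq_of_inner_eq_zero x y h

variable [FiniteDimensional 𝕜 F] [CompleteSpace F] [CompleteSpace H] {M : Submodule 𝕜 H}
  {i e e' : F →ₗᵢ[𝕜] H} (hi : ∀ x, i x ∈ Mᗮ) (he : ∀ x, e x ∈ M) (he' : ∀ x, e' x ∈ M)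
  (hee' : ∀ x y, inner 𝕜 (e x) (e' y) = 0) (hie : ∀ x y, inner 𝕜 (i x) (e y) = 0) {θ : ℝ}
  {T : F →ₗ[𝕜] F}
include hi he he' hee'

theorem exists_planeRotation_apply_eq_left (hsin : 0 < Real.sin θ) (hcos : 0 ≤ Real.cos θ)
    (hT : ∀ x, ‖T x - x‖ ≤ (1 - Real.cos θ) * ‖x‖) :
    ∃ g ∈ pointwiseStabilizer Mᗮ, ∃ m : F →ₗ[𝕜] H, (∀ x, m x ∈ M) ∧
      ∀ x, planeRotation hie θ (g (planeRotation hie θ (i x))) =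
        i ((Real.cos θ : 𝕜) • T x) + m x := by
  have hie' (y x : F) : inner 𝕜 (i x) (e' y) = 0 :=
    M.inner_left_of_mem_orthogonal (he' y) (hi x)
  set c := Real.cos θ
  set s := Real.sin θ
  have hs : (s : 𝕜) ≠ 0 := RCLike.ofReal_ne_zero.mpr hsin.ne'
  -- `Z` is the solution of `c • (c • x) - s • Z x = c • T x`.
  let Z : F →ₗ[𝕜] F := ((c ^ 2 / s : ℝ) : 𝕜) • LinearMap.id - ((c / s : ℝ) : 𝕜) • T
  have hZ : ∀ x, (c : 𝕜) • (c : 𝕜) • x - (s : 𝕜) • Z x = (c : 𝕜) • T x := fun x => by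
    simp only [Z, LinearMap.sub_apply, LinearMap.smul_apply, LinearMap.id_apply]
    push_cast
    match_scalars <;> field_simp
    ring
  obtain ⟨B, hB⟩ := exists_norm_sq_eq_sub (Z := Z) (r := s) fun x =>
    norm_smul_sub_smul_le hcos hsin (Real.sin_sq_add_cos_sq θ) (hT x)
  obtain ⟨g, hg, hge⟩ := exists_mem_pointwiseStabilizer_apply_eq (M := M)
    (m := e.toLinearMap ∘ₗ ((s : 𝕜) • LinearMap.id))
    (m' := e.toLinearMap ∘ₗ Z + e'.toLinearMap ∘ₗ B) (fun x => he _)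
    (fun x => M.add_mem (he _) (he' _)) fun x => by
      rw [← sq_eq_sq₀ (norm_nonneg _) (norm_nonneg _)]
      refine Eq.trans ?_ (norm_add_sq_of_inner_eq_zero (hee' (Z x) (B x))).symm
      rw [e'.norm_map, hB, e.norm_map, LinearMap.comp_apply, LinearIsometry.coe_toLinearMap,
        e.norm_map]
      simp [norm_smul, mul_pow]
  refine ⟨g, hg, e.toLinearMap ∘ₗ ((s : 𝕜) • (c : 𝕜) • LinearMap.id + (c : 𝕜) • Z) +
    e'.toLinearMap ∘ₗ B, fun x => M.add_mem (he _) (he' _), fun x => ?_⟩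
  calc planeRotation hie θ (g (planeRotation hie θ (i x)))
      = planeRotation hie θ (g (i ((c : 𝕜) • x) + e ((s : 𝕜) • x))) := by
        have h := planeRotation_apply_add hie θ x 0 (z := 0) (by simp) (by simp)
        simp only [map_zero, smul_zero, add_zero, sub_zero] at h
        rw [h]
    _ = planeRotation hie θ (i ((c : 𝕜) • x) + e (Z x) + e' (B x)) := by
        rw [map_add, hg _ (hi _), add_assoc]
        exact congrArg (fun y => planeRotation hie θ (_ + y)) (hge x)
    _ = i ((c : 𝕜) • T x) + (e ((s : 𝕜) • (c : 𝕜) • x + (c : 𝕜) • Z x) + e' (B x)) := by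
        rw [planeRotation_apply_add hie θ _ _ (hie' _) (hee' · _), hZ, add_assoc]

theorem exists_planeRotation_apply_eq_right {m m' : F →ₗ[𝕜] H} (hm : ∀ x, m x ∈ M)
    (hm' : ∀ x, m' x ∈ M) (hTm : ∀ x, ‖(Real.cos θ : 𝕜) • T x‖ ^ 2 + ‖m x‖ ^ 2 = ‖x‖ ^ 2)
    (hTm' : ∀ x, ‖T x‖ ^ 2 + ‖m' x‖ ^ 2 = ‖x‖ ^ 2) :
    ∃ g ∈ pointwiseStabilizer Mᗮ, ∃ g' ∈ pointwiseStabilizer Mᗮ,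
      ∀ x, g' (planeRotation hie θ (g (i ((Real.cos θ : 𝕜) • T x) + m x))) = i (T x) + m' x := by
  have hie' (y x : F) : inner 𝕜 (i x) (e' y) = 0 :=
    M.inner_left_of_mem_orthogonal (he' y) (hi x)
  set c := Real.cos θ
  set s := Real.sin θ
  have hcs : s ^ 2 + c ^ 2 = 1 := Real.sin_sq_add_cos_sq θ
  obtain ⟨B, hB⟩ := exists_norm_sq_eq_sub (Z := T) (r := 1) fun x => by
    rw [one_mul, ← sq_le_sq₀ (norm_nonneg _) (norm_nonneg _), ← hTm' x]
    exact le_add_of_nonneg_right (sq_nonneg _)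
  obtain ⟨g, hg, hgm⟩ := exists_mem_pointwiseStabilizer_apply_eq (M := M) (m := m)
    (m' := e.toLinearMap ∘ₗ (-(s : 𝕜) • T) + e'.toLinearMap ∘ₗ B) hm
    (fun x => M.add_mem (he _) (he' _)) fun x => by
      rw [← sq_eq_sq₀ (norm_nonneg _) (norm_nonneg _)]
      refine Eq.trans ?_ (norm_add_sq_of_inner_eq_zero (hee' (-(s : 𝕜) • T x) (B x))).symm
      have h := hTm x
      rw [norm_smul, mul_pow, RCLike.norm_ofReal, sq_abs] at h
      rw [e.norm_map, e'.norm_map, hB, norm_smul, mul_pow, norm_neg, RCLike.norm_ofReal, sq_abs]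
      linear_combination h - ‖T x‖ ^ 2 * hcs
  obtain ⟨g', hg', hgm'⟩ := exists_mem_pointwiseStabilizer_apply_eq (M := M)
    (m := e'.toLinearMap ∘ₗ B) (m' := m') (fun x => he' _) hm' fun x => by
      rw [← sq_eq_sq₀ (norm_nonneg _) (norm_nonneg _), LinearMap.comp_apply,
        LinearIsometry.coe_toLinearMap, e'.norm_map, hB]
      linear_combination -hTm' x
  refine ⟨g, hg, g', hg', fun x => ?_⟩
  calc g' (planeRotation hie θ (g (i ((c : 𝕜) • T x) + m x)))
      = g' (planeRotation hie θ (i ((c : 𝕜) • T x) + e (-(s : 𝕜) • T x) + e' (B x))) := by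
        rw [map_add, hg _ (hi _), hgm, add_assoc]
        rfl
    _ = g' (i (T x) + e' (B x)) := by
        rw [planeRotation_apply_add hie θ _ _ (hie' _) (hee' · _)]
        have hcs' : (c : 𝕜) • (c : 𝕜) • T x - (s : 𝕜) • -(s : 𝕜) • T x = T x := by
          calc _ = ((s ^ 2 + c ^ 2 : ℝ) : 𝕜) • T x := by push_cast; module
            _ = T x := by rw [hcs, RCLike.ofReal_one, one_smul]
        have hsc : (s : 𝕜) • (c : 𝕜) • T x + (c : 𝕜) • -(s : 𝕜) • T x = 0 := by module
        rw [hcs', hsc, map_zero, add_zero]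
    _ = i (T x) + m' x := by
        rw [map_add, hg' _ (hi _)]
        exact congrArg _ (hgm' x)

theorem exists_mul_planeRotation_apply_eq (hsin : 0 < Real.sin θ) (hcos : 0 ≤ Real.cos θ)
    (hT : ∀ x, ‖T x - x‖ ≤ (1 - Real.cos θ) * ‖x‖) {m : F →ₗ[𝕜] H} (hm : ∀ x, m x ∈ M)
    (hTm : ∀ x, ‖T x‖ ^ 2 + ‖m x‖ ^ 2 = ‖x‖ ^ 2) :
    ∃ g₀ ∈ pointwiseStabilizer Mᗮ, ∃ g₁ ∈ pointwiseStabilizer Mᗮ, ∃ g₂ ∈ pointwiseStabilizer Mᗮ,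
      ∀ x, (g₀ * planeRotation hie θ * g₁ * planeRotation hie θ * g₂ * planeRotation hie θ) (i x) =
        i (T x) + m x := by
  obtain ⟨g₂, hg₂, m₂, hm₂, h₂⟩ :=
    exists_planeRotation_apply_eq_left hi he he' hee' hie hsin hcos hT
  have hTm₂ : ∀ x, ‖(Real.cos θ : 𝕜) • T x‖ ^ 2 + ‖m₂ x‖ ^ 2 = ‖x‖ ^ 2 := fun x => by
    rw [← i.norm_map, ← norm_add_sq_of_inner_eq_zero
      (M.inner_left_of_mem_orthogonal (hm₂ x) (hi _)), ← h₂]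
    simp only [LinearIsometryEquiv.norm_map, LinearIsometry.norm_map]
  obtain ⟨g₁, hg₁, g₀, hg₀, h₁⟩ :=
    exists_planeRotation_apply_eq_right hi he he' hee' hie hm₂ hm hTm₂ hTm
  refine ⟨g₀, hg₀, g₁, hg₁, g₂, hg₂, fun x => ?_⟩
  simp only [LinearIsometryEquiv.coe_mul, Function.comp_apply, h₂, h₁]

end Factorization

section Neighborhood

variable {𝕜 H : Type*} [RCLike 𝕜] [NormedAddCommGroup H] [InnerProductSpace 𝕜 H]

theorem nonempty_linearIsometry (F M : Type*) [NormedAddCommGroup F] [InnerProductSpace 𝕜 F]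
    [FiniteDimensional 𝕜 F] [NormedAddCommGroup M] [InnerProductSpace 𝕜 M]
    (hM : ¬ FiniteDimensional 𝕜 M) : Nonempty (F →ₗᵢ[𝕜] M) := by
  have hrank : Module.finrank 𝕜 F ≤ Module.rank 𝕜 M :=
    Cardinal.natCast_lt_aleph0.le.trans (not_lt.mp fun h => hM (Module.rank_lt_aleph0_iff.mp h))
  obtain ⟨f, hf⟩ := exists_linearIndependent_of_le_rank hrank
  have hg := InnerProductSpace.gramSchmidtNormed_orthonormal hf
  let b := stdOrthonormalBasis 𝕜 F
  refine ⟨(b.toBasis.constr 𝕜 (InnerProductSpace.gramSchmidtNormed 𝕜 f)).isometryOfOrthonormal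
    (v := b.toBasis) (by simp) ?_⟩
  convert hg using 1
  ext k
  simp

theorem exists_orthogonal_linearIsometry (F : Type*) [NormedAddCommGroup F]
    [InnerProductSpace 𝕜 F] [FiniteDimensional 𝕜 F] {M : Submodule 𝕜 H}
    (hM : ¬ FiniteDimensional 𝕜 M) :
    ∃ e e' : F →ₗᵢ[𝕜] H, (∀ x, e x ∈ M) ∧ (∀ x, e' x ∈ M) ∧ ∀ x y, inner 𝕜 (e x) (e' y) = 0 := by
  obtain ⟨f⟩ := nonempty_linearIsometry (𝕜 := 𝕜) (WithLp 2 (F × F)) M hM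
  let toL2 := ((WithLp.linearEquiv 2 𝕜 (F × F)).symm : F × F →ₗ[𝕜] WithLp 2 (F × F))
  have hinner : ∀ x y, inner 𝕜 (M.subtype (f (toL2 x))) (M.subtype (f (toL2 y))) =
      inner 𝕜 x.1 y.1 + inner 𝕜 x.2 y.2 := fun x y =>
    ((M.subtypeₗᵢ.comp f).inner_map_map _ _).trans (WithLp.prod_inner_apply _ _)
  refine ⟨(M.subtype ∘ₗ f.toLinearMap ∘ₗ toL2 ∘ₗ .inl 𝕜 F F).isometryOfInner fun x y => ?_,
    (M.subtype ∘ₗ f.toLinearMap ∘ₗ toL2 ∘ₗ .inr 𝕜 F F).isometryOfInner fun x y => ?_,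
    fun x => (f _).2, fun x => (f _).2, fun x y => ?_⟩
  · exact (hinner _ _).trans (by simp)
  · exact (hinner _ _).trans (by simp)
  · exact (hinner _ _).trans (by simp)

theorem exists_isOpen_strongOperatorTopology (F : Submodule 𝕜 H) [FiniteDimensional 𝕜 F] {η : ℝ}
    (hη : 0 < η) :
    ∃ Ω : Set (H ≃ₗᵢ[𝕜] H), IsOpen[strongOperatorTopology 𝕜 H] Ω ∧ 1 ∈ Ω ∧
      ∀ u ∈ Ω, ∀ x : F, ‖u x - x‖ ≤ η * ‖x‖ := by
  let b := stdOrthonormalBasis 𝕜 F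
  set n := Module.finrank 𝕜 F
  refine ⟨{u | ∀ k, ‖u (b k) - b k‖ < η / (n + 1)}, ?_, fun k => ?_, fun u hu x => ?_⟩
  · refine isOpen_induced_iff.mpr ⟨{f | ∀ k, ‖f (b k) - b k‖ < η / (n + 1)}, ?_, rfl⟩
    simp only [Set.ofPred_forall]
    exact isOpen_iInter_of_finite fun k => isOpen_lt (by fun_prop) continuous_const
  · rw [LinearIsometryEquiv.coe_one, id, sub_self, norm_zero]
    positivity
  · have hx : u x - x = ∑ k, inner 𝕜 (b k) x • (u (b k) - b k : H) := by
      have h := congrArg F.subtype (b.sum_repr' x)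
      simp only [map_sum, map_smul, Submodule.subtype_apply] at h
      nth_rewrite 1 2 [← h]
      simp only [map_sum, map_smul, smul_sub, Finset.sum_sub_distrib]
    calc ‖u x - x‖ ≤ ∑ _k : Fin n, ‖x‖ * (η / (n + 1)) := by
          refine hx ▸ norm_sum_le_of_le _ fun k _ => ?_
          rw [norm_smul]
          refine mul_le_mul ?_ (hu k).le (norm_nonneg _) (norm_nonneg _)
          simpa [b.orthonormal.1 k] using norm_inner_le_norm (𝕜 := 𝕜) (b k) x
      _ = n / (n + 1) * (η * ‖x‖) := by
          rw [Finset.sum_const, Finset.card_univ, Fintype.card_fin, nsmul_eq_mul]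
          ring
      _ ≤ η * ‖x‖ := by
          refine mul_le_of_le_one_left (by positivity) ?_
          rw [div_le_one (by positivity)]
          linarith

theorem exists_apply_eq_add_of_mem_setwiseStabilizer {F K : Submodule 𝕜 H}
    [F.HasOrthogonalProjection] (hFK : F ≤ K) {u : H ≃ₗᵢ[𝕜] H} (hu : u ∈ setwiseStabilizer K) :
    ∃ (T : F →ₗ[𝕜] F) (m : F →ₗ[𝕜] H), (∀ x : F, u x = T x + m x) ∧ (∀ x, m x ∈ K ⊓ Fᗮ) ∧
      (∀ x, ‖T x - x‖ ≤ ‖u x - x‖) ∧ ∀ x, ‖T x‖ ^ 2 + ‖m x‖ ^ 2 = ‖x‖ ^ 2 := by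
  let T : F →ₗ[𝕜] F := (F.orthogonalProjectionOnto : H →ₗ[𝕜] F) ∘ₗ
    (u.toLinearEquiv : H →ₗ[𝕜] H) ∘ₗ F.subtype
  let m : F →ₗ[𝕜] H := (u.toLinearEquiv : H →ₗ[𝕜] H) ∘ₗ F.subtype - F.subtype ∘ₗ T
  have hum : ∀ x : F, u x = T x + m x := fun x => (add_sub_cancel (T x : H) (u x)).symm
  have hm : ∀ x, m x ∈ K ⊓ Fᗮ := fun x =>
    ⟨K.sub_mem (apply_mem_of_mem_setwiseStabilizer hu (hFK x.2)) (hFK (T x).2),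
      F.sub_starProjection_mem_orthogonal _⟩
  refine ⟨T, m, hum, hm, fun x => ?_, fun x => ?_⟩
  · have hTx : T x - x = F.orthogonalProjectionOnto (u x - x) := by
      rw [map_sub, F.orthogonalProjectionOnto_mem_subspace_eq_self]
      rfl
    rw [hTx]
    exact F.norm_orthogonalProjectionOnto_apply_le _
  · rw [Submodule.coe_norm, ← norm_add_sq_of_inner_eq_zero ((hm x).2 _ (T x).2), ← hum,
      u.norm_map, Submodule.coe_norm]

variable [CompleteSpace H]

theorem exists_eq_mul_planeRotation {F K : Submodule 𝕜 H} [FiniteDimensional 𝕜 F]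
    [K.HasOrthogonalProjection] (hFK : F ≤ K) {e e' : F →ₗᵢ[𝕜] H} (he : ∀ x, e x ∈ K ⊓ Fᗮ)
    (he' : ∀ x, e' x ∈ K ⊓ Fᗮ) (hee' : ∀ x y, inner 𝕜 (e x) (e' y) = 0)
    (hFe : ∀ x y, inner 𝕜 (F.subtypeₗᵢ x) (e y) = 0) {θ : ℝ} (hsin : 0 < Real.sin θ)
    (hcos : 0 ≤ Real.cos θ) {u : H ≃ₗᵢ[𝕜] H} (huK : u ∈ setwiseStabilizer K)
    (hu : ∀ x : F, ‖u x - x‖ ≤ (1 - Real.cos θ) * ‖x‖) :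
    ∃ g₀ ∈ pointwiseStabilizer (K ⊓ Fᗮ)ᗮ, ∃ g₁ ∈ pointwiseStabilizer (K ⊓ Fᗮ)ᗮ,
      ∃ g₂ ∈ pointwiseStabilizer (K ⊓ Fᗮ)ᗮ, ∃ g₃ ∈ pointwiseStabilizer (K ⊓ Fᗮ)ᗮ,
      ∃ v ∈ pointwiseStabilizer K, u = g₀ * planeRotation hFe θ * g₁ * planeRotation hFe θ * g₂ *
        planeRotation hFe θ * g₃ * v := by
  have hFM : F ≤ (K ⊓ Fᗮ)ᗮ :=
    F.le_orthogonal_orthogonal.trans (Submodule.orthogonal_le inf_le_right)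
  have hKM : Kᗮ ≤ (K ⊓ Fᗮ)ᗮ := Submodule.orthogonal_le inf_le_left
  obtain ⟨T, m, hum, hm, hT, hTm⟩ := exists_apply_eq_add_of_mem_setwiseStabilizer hFK huK
  obtain ⟨g₀, hg₀, g₁, hg₁, g₂, hg₂, hw⟩ := exists_mul_planeRotation_apply_eq
    (fun x => hFM x.2) he he' hee' hFe hsin hcos (fun x => (hT x).trans (hu x)) hm hTm
  obtain ⟨u', hu', v, hv, huv⟩ := exists_eq_mul_of_mem_setwiseStabilizer huK
  set R := planeRotation hFe θ
  have hR : R ∈ pointwiseStabilizer Kᗮ := fun z hz => by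
    simpa only [map_zero, smul_zero, add_zero, sub_zero, zero_add] using
      planeRotation_apply_add hFe θ 0 0 (fun x => hz x (hFK x.2)) fun y => hz _ (he y).1
  set w := g₀ * R * g₁ * R * g₂ * R
  refine ⟨g₀, hg₀, g₁, hg₁, g₂, hg₂, w⁻¹ * u', mem_pointwiseStabilizer_inf_orthogonal hFK
    (inv_mul_mem_pointwiseStabilizer fun x hx => ?_)
    (inv_mul_mem_pointwiseStabilizer fun z hz => ?_), v, hv, ?_⟩
  · calc w x = u x := (hw ⟨x, hx⟩).trans (hum ⟨x, hx⟩).symm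
      _ = u' (v x) := by rw [huv]; rfl
      _ = u' x := by rw [hv x (hFK hx)]
  · simp only [w, LinearIsometryEquiv.coe_mul, Function.comp_apply, hR z hz, hg₀ z (hKM hz),
      hg₁ z (hKM hz), hg₂ z (hKM hz), hu' z hz]
  · rw [huv]
    change u' * v = w * (w⁻¹ * u') * v
    rw [mul_inv_cancel_left]

end Neighborhood

section Blocks

theorem nonempty_prod_equiv (ι J : Type*) [Countable ι] [Nonempty ι] [Infinite J] :
    Nonempty (ι × J ≃ J) := by
  rw [← Cardinal.lift_mk_eq', Cardinal.mk_prod]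
  simp only [Cardinal.lift_mul, Cardinal.lift_lift]
  refine Cardinal.mul_eq_right ?_ ?_ ?_
  · simp
  · exact (Cardinal.lift_le_aleph0.mpr Cardinal.mk_le_aleph0).trans (by simp)
  · simp

theorem mk_preimage_fst {ι J : Type*} [Countable ι] [Infinite J] {T : Set ι} (hT : T.Nonempty) :
    Cardinal.mk (Prod.fst ⁻¹' T : Set (ι × J)) = Cardinal.mk (ι × J) := by
  have := hT.to_subtype
  have := hT.to_type
  obtain ⟨e⟩ := nonempty_prod_equiv T J
  obtain ⟨e'⟩ := nonempty_prod_equiv ι J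
  exact Cardinal.mk_congr (Equiv.prodSubtypeFstEquivSubtypeProd.trans (e.trans e'.symm))

variable {𝕜 H : Type*} [RCLike 𝕜] [NormedAddCommGroup H] [InnerProductSpace 𝕜 H]

theorem infinite_of_hilbertBasis {J : Type*} (b : HilbertBasis J 𝕜 H)
    (hinf : ¬ FiniteDimensional 𝕜 H) : Infinite J := by
  refine not_finite_iff_infinite.mp fun hJ => hinf ?_
  have := Fintype.ofFinite J
  exact b.toOrthonormalBasis.toBasis.finiteDimensional_of_finite

theorem exists_infinite_blocks [CompleteSpace H] (hinf : ¬ FiniteDimensional 𝕜 H) (ι : Type*)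
    [Countable ι] [Nonempty ι] :
    ∃ (J : Set H) (b : HilbertBasis (ι × J) 𝕜 H) (Φ : H ≃ₗᵢ[𝕜] lp (fun _ : ι => H) 2),
      Infinite J ∧ ∀ S, supportedOn Φ S = supportedOn b.repr (Prod.fst ⁻¹' S) := by
  obtain ⟨J, b, -⟩ := exists_hilbertBasis 𝕜 H
  have hJ := infinite_of_hilbertBasis b hinf
  obtain ⟨e⟩ := nonempty_prod_equiv ι J
  obtain ⟨c⟩ := exists_hilbertBasis_of_equiv b e
  obtain ⟨Φ, hΦ⟩ := exists_blocks_supportedOn_eq c b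
  exact ⟨J, c, Φ, hJ, hΦ⟩

end Blocks

section Main

open Cardinal

variable {𝕜 H : Type*} [RCLike 𝕜] [NormedAddCommGroup H] [InnerProductSpace 𝕜 H]
  {W : Set (H ≃ₗᵢ[𝕜] H)}

theorem conj_mem_pointwiseStabilizer_of_inv_apply_mem {K M : Submodule 𝕜 H} {g h : H ≃ₗᵢ[𝕜] H}
    (hM : ∀ x ∈ M, h⁻¹ x ∈ Kᗮ) (hg : g ∈ pointwiseStabilizer Mᗮ) :
    h⁻¹ * g * h ∈ pointwiseStabilizer K :=
  conj_mem_pointwiseStabilizer (fun x hx => (Submodule.mem_orthogonal _ _).mpr fun y hy => by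
    rw [← (h⁻¹).inner_map_map]
    exact (Submodule.mem_orthogonal' _ _).mp (hM y hy) _ (by simpa using hx)) hg

variable [CompleteSpace H]

theorem IsCountablySyndetic.exists_isOpen_inter_setwiseStabilizer_subset
    (hW : IsCountablySyndetic W) {F K : Submodule 𝕜 H} [FiniteDimensional 𝕜 F]
    [K.HasOrthogonalProjection] (hK : ¬ FiniteDimensional 𝕜 K) (hFK : F ≤ K)
    (hKW : pointwiseStabilizer K ⊆ (W⁻¹ * W) ^ 4) {h : H ≃ₗᵢ[𝕜] H} (hh : h ∈ W⁻¹ * W)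
    (hM : ∀ x ∈ K ⊓ Fᗮ, h⁻¹ x ∈ Kᗮ) :
    ∃ Ω : Set (H ≃ₗᵢ[𝕜] H), IsOpen[strongOperatorTopology 𝕜 H] Ω ∧ 1 ∈ Ω ∧
      Ω ∩ setwiseStabilizer K ⊆ (W⁻¹ * W) ^ 25 := by
  have hMinf : ¬ FiniteDimensional 𝕜 (K ⊓ Fᗮ : Submodule 𝕜 H) := fun _ => hK <| by
    rw [← Submodule.sup_orthogonal_inf_of_hasOrthogonalProjection hFK, inf_comm]
    infer_instance
  obtain ⟨e, e', he, he', hee'⟩ := exists_orthogonal_linearIsometry F hMinf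
  have hFe : ∀ x y : F, inner 𝕜 (F.subtypeₗᵢ x) (e y) = 0 := fun x y => (he y).2 x x.2
  obtain ⟨θ, ⟨hθ0, hθ1⟩, hθ⟩ := hW.exists_mem_Ioo_apply_mem
    (f := fun θ => h⁻¹ * planeRotation hFe θ * h)
    (fun θ φ => by rw [planeRotation_add]; group) zero_lt_one
  have hsin : 0 < Real.sin θ := Real.sin_pos_of_pos_of_le_one hθ0 hθ1.le
  have hcos : 0 < Real.cos θ := Real.cos_pos_of_le_one (abs_le.mpr ⟨by linarith, hθ1.le⟩)
  have hcos1 : 0 < 1 - Real.cos θ := by nlinarith [Real.sin_sq_add_cos_sq θ]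
  obtain ⟨Ω, hΩ, hΩ1, hΩF⟩ := exists_isOpen_strongOperatorTopology F hcos1
  refine ⟨Ω, hΩ, hΩ1, ?_⟩
  rintro u ⟨huΩ, huK⟩
  obtain ⟨g₀, hg₀, g₁, hg₁, g₂, hg₂, g₃, hg₃, v, hv, rfl⟩ :=
    exists_eq_mul_planeRotation hFK he he' hee' hFe hsin hcos.le huK (hΩF u huΩ)
  set R := planeRotation hFe θ
  have hconj : ∀ g ∈ pointwiseStabilizer (K ⊓ Fᗮ)ᗮ, h⁻¹ * g * h ∈ (W⁻¹ * W) ^ 4 := fun g hg =>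
    hKW (conj_mem_pointwiseStabilizer_of_inv_apply_mem hM hg)
  have hconjR : ∀ g ∈ pointwiseStabilizer (K ⊓ Fᗮ)ᗮ, h⁻¹ * g * R * h ∈ (W⁻¹ * W) ^ 5 :=
    fun g hg => by
      rw [show h⁻¹ * g * R * h = h⁻¹ * g * h * (h⁻¹ * R * h) by group, pow_succ]
      exact Set.mul_mem_mul (hconj g hg) hθ
  have hu : g₀ * R * g₁ * R * g₂ * R * g₃ * v = h * (h⁻¹ * g₀ * R * h) * (h⁻¹ * g₁ * R * h) *
      (h⁻¹ * g₂ * R * h) * (h⁻¹ * g₃ * h) * h⁻¹ * v := by group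
  rw [hu, show 25 = 1 + 5 + 5 + 5 + 4 + 1 + 4 from rfl]
  simp only [pow_add, pow_one]
  exact Set.mul_mem_mul (Set.mul_mem_mul (Set.mul_mem_mul (Set.mul_mem_mul (Set.mul_mem_mul
    (Set.mul_mem_mul hh (hconjR g₀ hg₀)) (hconjR g₁ hg₁)) (hconjR g₂ hg₂)) (hconj g₃ hg₃))
    (inv_mem_inv_mul_self hh)) (hKW hv)

theorem exists_balanced_subspace_stabilizer_open_nhd_general (hinf : ¬ FiniteDimensional 𝕜 H)
    (hW : IsCountablySyndetic W) :
    ∃ K : Submodule 𝕜 H, IsClosed (K : Set H) ∧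
      ¬ FiniteDimensional 𝕜 K ∧ ¬ FiniteDimensional 𝕜 Kᗮ ∧
      pointwiseStabilizer K ⊆ (W⁻¹ * W) ^ 4 ∧
      ∃ O : Set (H ≃ₗᵢ[𝕜] H), O ⊆ setwiseStabilizer K ∧ O ⊆ (W⁻¹ * W) ^ 25 ∧ 1 ∈ O ∧
        ∃ Ω : Set (H ≃ₗᵢ[𝕜] H), IsOpen[strongOperatorTopology 𝕜 H] Ω ∧
          O = Ω ∩ setwiseStabilizer K := by
  obtain ⟨J, b, Φ, _, hΦ⟩ := exists_infinite_blocks hinf ((ℕ × ℕ) × ℤ)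
  obtain ⟨i, hi⟩ := hW.exists_pointwiseStabilizer_subset_pow_four Φ
  rw [hΦ] at hi
  set S : Set (((ℕ × ℕ) × ℤ) × J) := Prod.fst ⁻¹' {i}ᶜ
  have hS : #S = #(((ℕ × ℕ) × ℤ) × J) :=
    mk_preimage_fst (Set.nonempty_compl_of_nontrivial i)
  have hSc : #(Sᶜ : Set _) = #(((ℕ × ℕ) × ℤ) × J) := by
    rw [← Set.preimage_compl, compl_compl]
    exact mk_preimage_fst (Set.singleton_nonempty i)
  obtain ⟨h, hh, A, hAS, hA, hM⟩ := hW.exists_inv_apply_mem_supportedOn_compl b hS hSc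
  have hfin : ∀ {S : Set (((ℕ × ℕ) × ℤ) × J)}, #S = #(((ℕ × ℕ) × ℤ) × J) →
      ¬ FiniteDimensional 𝕜 (supportedOn b.repr S) := fun hS =>
    not_finiteDimensional_supportedOn_repr b <| Set.infinite_coe_iff.mp <|
      infinite_iff.mpr (hS ▸ aleph0_le_mk _)
  have := finiteDimensional_supportedOn_repr b hA
  obtain ⟨Ω, hΩ, hΩ1, hΩW⟩ := hW.exists_isOpen_inter_setwiseStabilizer_subset (hfin hS)
    (supportedOn_mono b.repr hAS) hi hh fun x hx => by
      rw [orthogonal_supportedOn]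
      refine hM x ?_
      rwa [orthogonal_supportedOn, supportedOn_inf] at hx
  exact ⟨supportedOn b.repr S, isClosed_supportedOn _ _, hfin hS,
    orthogonal_supportedOn b.repr S ▸ hfin hSc, hi, Ω ∩ setwiseStabilizer _,
    Set.inter_subset_right, hΩW, ⟨hΩ1, Submodule.map_id _⟩, Ω, hΩ, rfl⟩

end Main

/-- Let `H` be an infinite-dimensional separable complex Hilbert space and `W` a symmetric
countably syndetic subset of `U(H)`. Then there is a balanced closed subspace `K` of `H`
(i.e. both `K` and `Kᗮ` are infinite-dimensional) such that the pointwise stabilizer `G_K`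
is contained in `W ^ 24`, and `W ^ 120` contains a subset of the setwise stabilizer `I_K`
that is an open neighborhood of the identity in `I_K` (for the relative strong operator
topology). -/
theorem exists_balanced_subspace_stabilizer_open_nhd
    {H : Type*} [NormedAddCommGroup H] [InnerProductSpace ℂ H] [CompleteSpace H]
    [TopologicalSpace.SeparableSpace H] (hinf : ¬ FiniteDimensional ℂ H)
    (W : Set (H ≃ₗᵢ[ℂ] H)) (hsym : W⁻¹ = W)
    (hsynd : ∃ s : ℕ → (H ≃ₗᵢ[ℂ] H), ∀ g : (H ≃ₗᵢ[ℂ] H), ∃ n : ℕ, g ∈ s n • W) :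
    ∃ K : Submodule ℂ H, IsClosed (K : Set H) ∧
      ¬ FiniteDimensional ℂ K ∧ ¬ FiniteDimensional ℂ Kᗮ ∧
      pointwiseStabilizer K ⊆ W ^ 24 ∧
      ∃ O : Set (H ≃ₗᵢ[ℂ] H), O ⊆ setwiseStabilizer K ∧ O ⊆ W ^ 120 ∧ 1 ∈ O ∧
        ∃ Ω : Set (H ≃ₗᵢ[ℂ] H), IsOpen[strongOperatorTopology ℂ H] Ω ∧
          O = Ω ∩ setwiseStabilizer K := by
  have hW : IsCountablySyndetic W := hsynd
  have hW2 : W⁻¹ * W = W ^ 2 := by rw [hsym, sq]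
  have h1 := hW.one_mem_inv_mul_self
  obtain ⟨K, hK, hKinf, hKinf', hKW, O, hOK, hOW, hO⟩ :=
    exists_balanced_subspace_stabilizer_open_nhd_general hinf hW
  rw [hW2] at h1 hKW hOW
  refine ⟨K, hK, hKinf, hKinf', hKW.trans ?_, O, hOK, hOW.trans ?_, hO⟩
  · exact (Set.pow_subset_pow_right h1 (by norm_num : 4 ≤ 12)).trans_eq (pow_mul W 2 12).symm
  · exact (Set.pow_subset_pow_right h1 (by norm_num : 25 ≤ 60)).trans_eq (pow_mul W 2 60).symm
end
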